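/- arXiv:1403.2527 — 5 statements merged into one kernel-verified Lean document; each statement's English description precedes it below -/
import Mathlib

section
/- Suppose the optimal value f* of the auxiliary linear program satisfies f* < 0, and assumptions (D1) and (D2) on the recharge rates hold. Then the probability that the optimal lifetime is infinite tends to 1 as the initial energy grows: lim_{e0 → ∞} P(N_opt = ∞) = 1. -/
open MeasureTheory Filter Finset Matrix

/-- Available energy of base station `m` at the end of slot `n`:
`e^(n) = e0·u + τ·Σ_{t=1}^n s^(t) − τ·C·Σ_{t=1}^n v^(t)`. -/
noncomputable def energyVec {M : ℕ} (τ : ℝ) (C : Matrix (Fin M) (Fin M) ℝ)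
    (e0 : ℝ) (s v : ℕ → Fin M → ℝ) (n : ℕ) (m : Fin M) : ℝ :=
  e0 + τ * (∑ t ∈ Finset.Icc 1 n, s t m)
    - τ * C.mulVec (∑ t ∈ Finset.Icc 1 n, v t) m

/-- A decision vector: entries in `{0,1}` with exactly one `1` (i.e. `uᵀv = 1`). -/
def IsDecision {M : ℕ} (v : Fin M → ℝ) : Prop :=
  (∀ m, v m = 0 ∨ v m = 1) ∧ (∑ m, v m) = 1

/-- The optimal lifetime: the supremum in `ℕ ∪ {∞}` of those `N` for which some
sequence of decision vectors keeps all available energies nonnegative up to slot `N`. -/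
noncomputable def Nopt {M : ℕ} (τ : ℝ) (C : Matrix (Fin M) (Fin M) ℝ)
    (e0 : ℝ) (s : ℕ → Fin M → ℝ) : ℕ∞ :=
  sSup {x : ℕ∞ | ∃ N : ℕ, x = (N : ℕ∞) ∧ ∃ v : ℕ → Fin M → ℝ,
    (∀ t, IsDecision (v t)) ∧
    ∀ n, 1 ≤ n → n ≤ N → ∀ m, 0 ≤ energyVec τ C e0 s v n m}

/-!
A schedule fixed in advance already suffices. Let `p` be a strictly feasible point of the linear
program, so that `(C *ᵥ p) m < sbar m` for every station. Greedy rounding gives decision vectors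
whose partial sums stay within bounded distance of `n • p`; up to a constant, the energy of station
`m` is then `e0` plus `τ` times a walk whose increments `s t m - (C *ᵥ p) m` are bounded and have
conditional mean bounded below by a positive constant. For a small tilt `a > 0` the moment
`E[exp (-a * walk)]` decays geometrically in the number of steps, so Chernoff's inequality and a
union bound over all times show that the walk ever falls below `-K` with probability
`O(exp (-a * K))`.
-/

section Rounding

lemma exists_seq_sum_range_mem {ι G : Type*} [AddCommMonoid G] (f : ι → G) {B : Set G}
    (h0 : 0 ∈ B) (hstep : ∀ x ∈ B, ∃ i, x + f i ∈ B) :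
    ∃ c : ℕ → ι, ∀ n, ∑ k ∈ range n, f (c k) ∈ B := by
  have : Nonempty ι := (hstep 0 h0).nonempty
  choose! pick hpick using hstep
  let x : ℕ → G := fun n => (fun y => y + f (pick y))^[n] 0
  have x_succ (n : ℕ) : x (n + 1) = x n + f (pick (x n)) := Function.iterate_succ_apply' ..
  have x_mem (n : ℕ) : x n ∈ B := by
    induction n with
    | zero => exact h0
    | succ n ih => exact x_succ n ▸ hpick _ ih
  have sum_eq (n : ℕ) : ∑ k ∈ range n, f (pick (x k)) = x n := by
    induction n with
    | zero => rfl
    | succ n ih => rw [sum_range_succ, ih, x_succ]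
  exact ⟨fun k => pick (x k), fun n => sum_eq n ▸ x_mem n⟩

variable {ι : Type*} [Fintype ι]

lemma norm_le_card_of_sum_eq_zero_of_le_one {x : ι → ℝ} (hsum : ∑ i, x i = 0)
    (hx : ∀ i, x i ≤ 1) : ‖x‖ ≤ Fintype.card ι := by
  refine (pi_norm_le_iff_of_nonneg (Nat.cast_nonneg _)).2 fun i => ?_
  have hgap : 1 - x i ≤ ∑ j, (1 - x j) :=
    single_le_sum (f := fun j => 1 - x j) (fun j _ => sub_nonneg.2 (hx j)) (mem_univ i)
  have hcard : ∑ j, (1 - x j) = Fintype.card ι := by simp [hsum]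
  have hpos : (1 : ℝ) ≤ Fintype.card ι := by exact_mod_cast Fintype.card_pos_iff.2 ⟨i⟩
  exact abs_le.2 ⟨by linarith, (hx i).trans hpos⟩

variable [DecidableEq ι] {p : ι → ℝ}

lemma exists_add_single_sub_le_one (hp : p ∈ stdSimplex ℝ ι) {x : ι → ℝ} (hsum : ∑ i, x i = 0)
    (hx : ∀ i, x i ≤ 1) : ∃ i, ∀ j, (x + (Pi.single i 1 - p : ι → ℝ)) j ≤ 1 := by
  have hne : (univ : Finset ι).Nonempty := by
    by_contra h
    simpa [not_nonempty_iff_eq_empty.1 h] using hp.2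
  obtain ⟨i, -, hi⟩ : ∃ i ∈ univ, x i ≤ p i :=
    exists_le_of_sum_le hne (by rw [hsum, hp.2]; exact zero_le_one)
  refine ⟨i, fun j => ?_⟩
  rw [Pi.add_apply, Pi.sub_apply]
  obtain rfl | hj := eq_or_ne j i
  · rw [Pi.single_eq_same]
    linarith
  · rw [Pi.single_eq_of_ne hj]
    linarith [hp.1 j, hx j]

lemma exists_seq_norm_sum_single_sub_le (hp : p ∈ stdSimplex ℝ ι) :
    ∃ c : ℕ → ι, ∀ n, ‖∑ k ∈ range n, (Pi.single (c k) 1 - p : ι → ℝ)‖ ≤ Fintype.card ι := by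
  obtain ⟨c, hc⟩ := exists_seq_sum_range_mem (fun i => Pi.single i 1 - p)
    (B := {x | ∑ i, x i = 0 ∧ ∀ i, x i ≤ 1}) (by simp) fun x hx => by
      obtain ⟨i, hi⟩ := exists_add_single_sub_le_one hp hx.1 hx.2
      exact ⟨i, by simp [sum_add_distrib, hx.1, hp.2], hi⟩
  exact ⟨c, fun n => norm_le_card_of_sum_eq_zero_of_le_one (hc n).1 (hc n).2⟩

end Rounding

section Schedule

lemma sub_of_const_mulVec {m n R : Type*} [Fintype n] [Ring R] (A : Matrix m n R) (b : m → R)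
    {p : n → R} (hp : ∑ i, p i = 1) : (A - of fun i _ => b i) *ᵥ p = A *ᵥ p - b := by
  rw [sub_mulVec]
  ext i
  simp [mulVec, dotProduct, ← mul_sum, hp]

variable {M : ℕ} {τ e0 : ℝ} {C : Matrix (Fin M) (Fin M) ℝ} {s v : ℕ → Fin M → ℝ}

lemma sum_Icc_one_eq_sum_range {G : Type*} [AddCommMonoid G] (f : ℕ → G) (n : ℕ) :
    ∑ t ∈ Icc 1 n, f t = ∑ k ∈ range n, f (k + 1) := by
  induction n with
  | zero => rfl
  | succ n ih => rw [sum_Icc_succ_top (by lia), sum_range_succ, ih]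

lemma isDecision_single (i : Fin M) : IsDecision (Pi.single i 1) := by
  refine ⟨fun m => ?_, by simp⟩
  obtain rfl | hm := eq_or_ne m i
  · exact .inr (Pi.single_eq_same ..)
  · exact .inl (Pi.single_eq_of_ne hm _)

open scoped Matrix.Norms.Operator in
lemma exists_isDecision_seq_mulVec_sum_le {κ : Type*} [Finite κ] (A : Matrix κ (Fin M) ℝ)
    {p : Fin M → ℝ} (hp : p ∈ stdSimplex ℝ (Fin M)) :
    ∃ v : ℕ → Fin M → ℝ, (∀ t, IsDecision (v t)) ∧
      ∃ K, ∀ n i, (A *ᵥ ∑ t ∈ Icc 1 n, v t) i ≤ n * (A *ᵥ p) i + K := by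
  have := Fintype.ofFinite κ
  obtain ⟨c, hc⟩ := exists_seq_norm_sum_single_sub_le hp
  refine ⟨fun t => Pi.single (c (t - 1)) 1, fun t => isDecision_single _, ‖A‖ * M, fun n i => ?_⟩
  set x : Fin M → ℝ := ∑ k ∈ range n, (Pi.single (c k) 1 - p) with hx
  have hsum : ∑ t ∈ Icc 1 n, Pi.single (c (t - 1)) 1 = (n : ℝ) • p + x := by
    simp [hx, sum_Icc_one_eq_sum_range, sum_sub_distrib, Nat.cast_smul_eq_nsmul]
  have hxA : (A *ᵥ x) i ≤ ‖A‖ * M :=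
    calc (A *ᵥ x) i ≤ ‖A *ᵥ x‖ := (le_abs_self _).trans (norm_le_pi_norm (A *ᵥ x) i)
      _ ≤ ‖A‖ * ‖x‖ := linfty_opNorm_mulVec A x
      _ ≤ ‖A‖ * M := by gcongr; exact (hc n).trans_eq (by simp)
  simpa [hsum, mulVec_add, mulVec_smul] using hxA

lemma energyVec_nonneg_of_lt_sum (hτ : 0 < τ) {b K : ℝ} {n : ℕ} {m : Fin M}
    (hv : (C *ᵥ ∑ t ∈ Icc 1 n, v t) m ≤ n * b + K)
    (hs : -(e0 / τ - K) < ∑ k ∈ range n, (s (k + 1) m - b)) :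
    0 ≤ energyVec τ C e0 s v n m := by
  have henergy : energyVec τ C e0 s v n m =
      τ * (e0 / τ + ∑ t ∈ Icc 1 n, s t m - (C *ᵥ ∑ t ∈ Icc 1 n, v t) m) := by
    rw [energyVec]
    field_simp
  have hsum : ∑ k ∈ range n, (s (k + 1) m - b) = ∑ t ∈ Icc 1 n, s t m - n * b := by
    simp [sum_Icc_one_eq_sum_range, sum_sub_distrib]
  rw [henergy]
  exact mul_nonneg hτ.le (by linarith)

lemma Nopt_eq_top_of_energyVec_nonneg (hv : ∀ t, IsDecision (v t))
    (h : ∀ n m, 0 ≤ energyVec τ C e0 s v n m) : Nopt τ C e0 s = ⊤ :=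
  ENat.eq_top_iff_forall_ge.2 fun N => le_sSup ⟨N, rfl, v, hv, fun n _ _ => h n⟩

end Schedule

section Walk

open ProbabilityTheory

variable {Ω : Type*} {m m0 : MeasurableSpace Ω} {μ : Measure Ω}

lemma integral_mul_le_of_condExp_le (hm : m ≤ m0) [SigmaFinite (μ.trim hm)] {Z g : Ω → ℝ} {r : ℝ}
    (hZ : StronglyMeasurable[m] Z) (hZ0 : 0 ≤ Z) (hZ_int : Integrable Z μ) (hg_int : Integrable g μ)
    (hZg_int : Integrable (Z * g) μ) (hg : μ[g | m] ≤ᵐ[μ] fun _ => r) :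
    ∫ ω, (Z * g) ω ∂μ ≤ r * ∫ ω, Z ω ∂μ := by
  rw [← integral_condExp hm, ← integral_const_mul]
  refine integral_mono_ae integrable_condExp (hZ_int.const_mul r) ?_
  filter_upwards [condExp_mul_of_stronglyMeasurable_left hZ hZg_int hg_int, hg] with ω hpull hgω
  rw [hpull, Pi.mul_apply, mul_comm]
  exact mul_le_mul_of_nonneg_right hgω (hZ0 ω)

lemma integrable_prod_range [IsFiniteMeasure μ] {g : ℕ → Ω → ℝ} {c : ℝ}
    (hg : ∀ n, AEStronglyMeasurable (g n) μ) (hbdd : ∀ n, ∀ᵐ ω ∂μ, ‖g n ω‖ ≤ c) (n : ℕ) :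
    Integrable (∏ k ∈ range n, g k) μ := by
  induction n with
  | zero => exact integrable_const 1
  | succ n ih => exact prod_range_succ g n ▸ ih.mul_bdd (hg n) (hbdd n)

lemma integral_prod_range_le_pow [IsProbabilityMeasure μ] {ℱ : Filtration ℕ m0} {g : ℕ → Ω → ℝ}
    {c r : ℝ} (hg : ∀ n, StronglyMeasurable[ℱ (n + 1)] (g n)) (hg0 : ∀ n, 0 ≤ g n)
    (hbdd : ∀ n, ∀ᵐ ω ∂μ, ‖g n ω‖ ≤ c) (hr : 0 ≤ r)
    (hcond : ∀ n, μ[g n | ℱ n] ≤ᵐ[μ] fun _ => r) (n : ℕ) :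
    ∫ ω, (∏ k ∈ range n, g k) ω ∂μ ≤ r ^ n := by
  have hg' (n : ℕ) : AEStronglyMeasurable (g n) μ := ((hg n).mono (ℱ.le _)).aestronglyMeasurable
  have hint := integrable_prod_range hg' hbdd
  induction n with
  | zero => simp
  | succ n ih =>
    have hpast : StronglyMeasurable[ℱ n] (∏ k ∈ range n, g k) :=
      Finset.stronglyMeasurable_prod _ fun k hk => (hg k).mono (ℱ.mono (mem_range.1 hk))
    calc ∫ ω, (∏ k ∈ range (n + 1), g k) ω ∂μ
        = ∫ ω, ((∏ k ∈ range n, g k) * g n) ω ∂μ := by rw [prod_range_succ]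
      _ ≤ r * ∫ ω, (∏ k ∈ range n, g k) ω ∂μ :=
          integral_mul_le_of_condExp_le (ℱ.le n) hpast (prod_nonneg fun k _ => hg0 k) (hint n)
            (.of_bound (hg' n) c (hbdd n)) (prod_range_succ g n ▸ hint (n + 1)) (hcond n)
      _ ≤ r * r ^ n := by gcongr
      _ = r ^ (n + 1) := (pow_succ' r n).symm

lemma exp_le_one_add_add_sq {x : ℝ} (hx : |x| ≤ 1) : Real.exp x ≤ 1 + x + x ^ 2 := by
  linarith [(abs_le.1 (Real.abs_exp_sub_one_sub_id_le hx)).2]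

lemma condExp_exp_mul_le [IsFiniteMeasure μ] (hm : m ≤ m0) {ξ : Ω → ℝ} {t B δ : ℝ}
    (hξ : AEStronglyMeasurable ξ μ) (hbdd : ∀ᵐ ω ∂μ, |ξ ω| ≤ B)
    (hdrift : (fun _ => δ) ≤ᵐ[μ] μ[ξ | m]) (ht : t ≤ 0) (htB : |t * B| ≤ 1) :
    μ[fun ω => Real.exp (t * ξ ω) | m] ≤ᵐ[μ] fun _ => Real.exp (t * δ + (t * B) ^ 2) := by
  have hξ_int : Integrable ξ μ := .of_bound hξ B hbdd
  have hexp_int : Integrable (fun ω => Real.exp (t * ξ ω)) μ :=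
    integrable_exp_mul_of_mem_Icc hξ.aemeasurable (hbdd.mono fun _ => abs_le.1)
  have hpointwise : (fun ω => Real.exp (t * ξ ω)) ≤ᵐ[μ] fun ω => t * ξ ω + (1 + (t * B) ^ 2) := by
    filter_upwards [hbdd] with ω hω
    have habs : |t * ξ ω| ≤ |t * B| := by
      rw [abs_mul, abs_mul]
      exact mul_le_mul_of_nonneg_left (hω.trans (le_abs_self B)) (abs_nonneg t)
    linarith [exp_le_one_add_add_sq (habs.trans htB), sq_le_sq.2 habs]
  have haffine : (fun ω => t * μ[ξ | m] ω + (1 + (t * B) ^ 2)) =ᵐ[μ]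
      μ[fun ω => t * ξ ω + (1 + (t * B) ^ 2) | m] :=
    (t • ContinuousLinearMap.id ℝ ℝ).comp_condExp_add_const_comm hm hξ_int _
  filter_upwards [condExp_mono (m := m) hexp_int ((hξ_int.const_mul t).add (integrable_const _))
    hpointwise, haffine, hdrift] with ω hmono haff hδ
  calc μ[fun ω => Real.exp (t * ξ ω) | m] ω
      ≤ t * μ[ξ | m] ω + (1 + (t * B) ^ 2) := hmono.trans_eq haff.symm
    _ ≤ t * δ + (t * B) ^ 2 + 1 := by linarith [mul_le_mul_of_nonpos_left hδ ht]
    _ ≤ Real.exp (t * δ + (t * B) ^ 2) := Real.add_one_le_exp _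

lemma le_of_const_ae_le_condExp [IsFiniteMeasure μ] [NeZero μ] (hm : m ≤ m0) {ξ : Ω → ℝ}
    {B δ : ℝ} (hξ : Integrable ξ μ) (hbdd : ∀ᵐ ω ∂μ, ξ ω ≤ B)
    (hdrift : (fun _ => δ) ≤ᵐ[μ] μ[ξ | m]) : δ ≤ B := by
  have hcond : μ[ξ | m] ≤ᵐ[μ] fun _ => B :=
    (condExp_mono hξ (integrable_const B) hbdd).trans_eq (.of_eq (condExp_const hm B))
  exact (hdrift.trans hcond).exists.choose_spec

lemma measure_exists_le_neg_le_of_mgf_le_pow [IsFiniteMeasure μ] {X : ℕ → Ω → ℝ} {a r : ℝ}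
    (ha : 0 ≤ a) (hr : r ∈ Set.Ico 0 1)
    (hint : ∀ n, Integrable (fun ω => Real.exp (-a * X n ω)) μ)
    (hmgf : ∀ n, mgf (X n) μ (-a) ≤ r ^ n) (K : ℝ) :
    μ {ω | ∃ n, X n ω ≤ -K} ≤ ENNReal.ofReal (Real.exp (-a * K) * (1 - r)⁻¹) := by
  have hchernoff (n : ℕ) : μ {ω | X n ω ≤ -K} ≤ ENNReal.ofReal (Real.exp (-a * K) * r ^ n) := by
    rw [← ofReal_measureReal]
    refine ENNReal.ofReal_le_ofReal ?_
    calc μ.real {ω | X n ω ≤ -K} ≤ Real.exp (-(-a) * -K) * mgf (X n) μ (-a) :=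
          measure_le_le_exp_mul_mgf _ (neg_nonpos.2 ha) (hint n)
      _ ≤ Real.exp (-a * K) * r ^ n := by
          rw [neg_mul_neg]
          gcongr
          exact hmgf n
  calc μ {ω | ∃ n, X n ω ≤ -K} = μ (⋃ n, {ω | X n ω ≤ -K}) := by rw [Set.ofPred_exists]
    _ ≤ ∑' n, μ {ω | X n ω ≤ -K} := measure_iUnion_le _
    _ ≤ ∑' n, ENNReal.ofReal (Real.exp (-a * K) * r ^ n) := ENNReal.tsum_le_tsum hchernoff
    _ = ENNReal.ofReal (∑' n, Real.exp (-a * K) * r ^ n) :=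
        (ENNReal.ofReal_tsum_of_nonneg (fun n => mul_nonneg (Real.exp_nonneg _) (pow_nonneg hr.1 n))
          ((summable_geometric_of_lt_one hr.1 hr.2).mul_left _)).symm
    _ = ENNReal.ofReal (Real.exp (-a * K) * (1 - r)⁻¹) := by
        rw [tsum_mul_left, tsum_geometric_of_lt_one hr.1 hr.2]

lemma exp_mul_sum_eq_prod (ξ : ℕ → Ω → ℝ) (t : ℝ) (n : ℕ) :
    (fun ω => Real.exp (t * ∑ k ∈ range n, ξ k ω)) =
      ∏ k ∈ range n, fun ω => Real.exp (t * ξ k ω) := by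
  ext ω
  rw [mul_sum, Real.exp_sum, Finset.prod_apply]

variable {ξ : ℕ → Ω → ℝ} {B δ : ℝ}

lemma norm_exp_mul_le {t x : ℝ} (hx : |x| ≤ B) : ‖Real.exp (t * x)‖ ≤ Real.exp (|t| * B) := by
  rw [Real.norm_eq_abs, Real.abs_exp, Real.exp_le_exp]
  calc t * x ≤ |t| * |x| := (le_abs_self _).trans_eq (abs_mul t x)
    _ ≤ |t| * B := by gcongr

lemma integrable_exp_mul_sum_range [IsFiniteMeasure μ] (hξ : ∀ n, AEStronglyMeasurable (ξ n) μ)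
    (hbdd : ∀ n, ∀ᵐ ω ∂μ, |ξ n ω| ≤ B) (t : ℝ) (n : ℕ) :
    Integrable (fun ω => Real.exp (t * ∑ k ∈ range n, ξ k ω)) μ := by
  rw [exp_mul_sum_eq_prod]
  exact integrable_prod_range
    (fun k => Real.continuous_exp.comp_aestronglyMeasurable ((hξ k).const_mul t))
    (fun k => (hbdd k).mono fun _ => norm_exp_mul_le) n

variable [IsProbabilityMeasure μ] {ℱ : Filtration ℕ m0}

lemma mgf_sum_range_le_pow (hξ : ∀ n, StronglyMeasurable[ℱ (n + 1)] (ξ n))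
    (hbdd : ∀ n, ∀ᵐ ω ∂μ, |ξ n ω| ≤ B) (hdrift : ∀ n, (fun _ => δ) ≤ᵐ[μ] μ[ξ n | ℱ n])
    {t : ℝ} (ht : t ≤ 0) (htB : |t * B| ≤ 1) (n : ℕ) :
    mgf (fun ω => ∑ k ∈ range n, ξ k ω) μ t ≤ Real.exp (t * δ + (t * B) ^ 2) ^ n := by
  rw [mgf, exp_mul_sum_eq_prod]
  exact integral_prod_range_le_pow
    (fun k => Real.continuous_exp.comp_stronglyMeasurable ((hξ k).const_mul t))
    (fun k ω => Real.exp_nonneg _) (fun k => (hbdd k).mono fun _ => norm_exp_mul_le)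
    (Real.exp_nonneg _) (fun k => condExp_exp_mul_le (ℱ.le k)
      ((hξ k).mono (ℱ.le _)).aestronglyMeasurable (hbdd k) (hdrift k) ht htB) n

lemma exists_pos_neg_mul_add_sq_neg (hδ : 0 < δ) (hδB : δ ≤ B) :
    ∃ a > 0, |-a * B| ≤ 1 ∧ -a * δ + (-a * B) ^ 2 < 0 := by
  have hB : 0 < B := hδ.trans_le hδB
  -- The minimiser in `a` of `-a * δ + (-a * B) ^ 2`.
  refine ⟨δ / (2 * B ^ 2), by positivity, ?_, ?_⟩
  · have htilt : -(δ / (2 * B ^ 2)) * B = -(δ / (2 * B)) := by field_simp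
    rw [htilt, abs_neg, abs_of_pos (by positivity), div_le_one (by positivity)]
    linarith
  · have hmin : -(δ / (2 * B ^ 2)) * δ + (-(δ / (2 * B ^ 2)) * B) ^ 2 = -(δ ^ 2 / (4 * B ^ 2)) := by
      field_simp
      ring
    rw [hmin]
    exact neg_neg_of_pos (by positivity)

lemma tendsto_measure_exists_sum_range_le_neg (hξ : ∀ n, StronglyMeasurable[ℱ (n + 1)] (ξ n))
    (hbdd : ∀ n, ∀ᵐ ω ∂μ, |ξ n ω| ≤ B) (hδ : 0 < δ)
    (hdrift : ∀ n, (fun _ => δ) ≤ᵐ[μ] μ[ξ n | ℱ n]) :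
    Tendsto (fun K : ℝ => μ {ω | ∃ n, ∑ k ∈ range n, ξ k ω ≤ -K}) atTop (nhds 0) := by
  have hξ' (n : ℕ) : AEStronglyMeasurable (ξ n) μ := ((hξ n).mono (ℱ.le _)).aestronglyMeasurable
  have hδB : δ ≤ B := le_of_const_ae_le_condExp (ℱ.le 0) (.of_bound (hξ' 0) B (hbdd 0))
    ((hbdd 0).mono fun _ => le_of_abs_le) (hdrift 0)
  obtain ⟨a, ha, haB, hneg⟩ := exists_pos_neg_mul_add_sq_neg hδ hδB
  have hbound := measure_exists_le_neg_le_of_mgf_le_pow (μ := μ) ha.le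
    ⟨Real.exp_nonneg _, Real.exp_lt_one_iff.2 hneg⟩ (integrable_exp_mul_sum_range hξ' hbdd (-a))
    (mgf_sum_range_le_pow hξ hbdd hdrift (neg_nonpos.2 ha.le) haB)
  refine tendsto_of_tendsto_of_tendsto_of_le_of_le tendsto_const_nhds ?_ (fun _ => zero_le) hbound
  have hexp : Tendsto (fun K : ℝ => Real.exp (-a * K)) atTop (nhds 0) :=
    Real.tendsto_exp_atBot.comp (tendsto_id.const_mul_atTop_of_neg (neg_neg_of_pos ha))
  simpa using ENNReal.tendsto_ofReal (hexp.mul_const _)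

lemma tendsto_measure_one_of_tendsto_measure_zero {ι α : Type*} [Finite ι] {l : Filter α}
    {A : α → Set Ω} {B : ι → α → Set Ω} (hB : ∀ i, Tendsto (fun x => μ (B i x)) l (nhds 0))
    (hA : ∀ x ω, (∀ i, ω ∉ B i x) → ω ∈ A x) : Tendsto (fun x => μ (A x)) l (nhds 1) := by
  have := Fintype.ofFinite ι
  have hbound (x : α) : 1 - ∑ i, μ (B i x) ≤ μ (A x) := by
    have hcover : Set.univ ⊆ A x ∪ ⋃ i, B i x := fun ω _ => by
      simpa [or_iff_not_imp_right] using hA x ω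
    rw [tsub_le_iff_right]
    calc 1 = μ Set.univ := measure_univ.symm
      _ ≤ μ (A x) + μ (⋃ i, B i x) := (measure_mono hcover).trans (measure_union_le _ _)
      _ ≤ μ (A x) + ∑ i, μ (B i x) := by gcongr; exact measure_iUnion_fintype_le μ _
  have hsum : Tendsto (fun x => ∑ i, μ (B i x)) l (nhds 0) := by
    simpa using tendsto_finsetSum univ fun i _ => hB i
  refine tendsto_of_tendsto_of_tendsto_of_le_of_le ?_ tendsto_const_nhds hbound
    fun _ => prob_le_one
  simpa using ENNReal.Tendsto.sub (tendsto_const_nhds (x := (1 : ENNReal))) hsum (by simp)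

end Walk

section Lifetime

variable {Ω : Type*} {m m0 : MeasurableSpace Ω} {μ : Measure Ω}

lemma le_condExp_apply_sub_const [IsFiniteMeasure μ] {ι : Type*} [Fintype ι] (hm : m ≤ m0)
    {X : Ω → ι → ℝ} {x : ι → ℝ} (hX : Integrable X μ) (hx : (fun _ => x) ≤ᵐ[μ] μ[X | m])
    (i : ι) (b : ℝ) : (fun _ => x i - b) ≤ᵐ[μ] μ[fun ω => X ω i - b | m] := by
  have hcoord : (fun ω => μ[X | m] ω i + -b) =ᵐ[μ] μ[fun ω => X ω i + -b | m] :=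
    (ContinuousLinearMap.proj (R := ℝ) (φ := fun _ : ι => ℝ) i).comp_condExp_add_const_comm
      hm hX (-b)
  simp only [sub_eq_add_neg]
  filter_upwards [hcoord, hx] with ω hω hxω
  exact hω ▸ add_le_add_left (hxω i) (-b)

theorem optimal_lifetime_infinite_of_fstar_neg_general {M : ℕ} {τ : ℝ} (hτ : 0 < τ)
    {C : Matrix (Fin M) (Fin M) ℝ} {sbar p : Fin M → ℝ} (hp : p ∈ stdSimplex ℝ (Fin M))
    (hfeas : ∀ i, (C *ᵥ p) i < sbar i) [IsProbabilityMeasure μ] {ℱ : Filtration ℕ m0}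
    {s : ℕ → Ω → Fin M → ℝ} {S : ℝ} (hs : ∀ n, Measurable[ℱ (n + 1)] (s (n + 1)))
    (hmean : ∀ n, (fun _ => sbar) ≤ᵐ[μ] μ[s (n + 1) | ℱ n])
    (hbdd : ∀ n, ∀ᵐ ω ∂μ, ‖s (n + 1) ω‖ ≤ S) :
    ∃ v : ℕ → Fin M → ℝ, (∀ t, IsDecision (v t)) ∧
      Tendsto (fun e0 => μ {ω | ∀ n i, 0 ≤ energyVec τ C e0 (fun t => s t ω) v n i})
        atTop (nhds 1) := by
  obtain ⟨v, hv, K, hvK⟩ := exists_isDecision_seq_mulVec_sum_le C hp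
  have hs_int (n : ℕ) : Integrable (s (n + 1)) μ :=
    .of_bound ((hs n).mono (ℱ.le _) le_rfl).aestronglyMeasurable S (hbdd n)
  have hwalk (i : Fin M) : Tendsto
      (fun L : ℝ => μ {ω | ∃ n, ∑ k ∈ range n, (s (k + 1) ω i - (C *ᵥ p) i) ≤ -L})
      atTop (nhds 0) := by
    refine tendsto_measure_exists_sum_range_le_neg (ℱ := ℱ) (B := S + |(C *ᵥ p) i|)
      (fun n => ?_) (fun n => ?_) (sub_pos.2 (hfeas i))
      fun n => le_condExp_apply_sub_const (ℱ.le n) (hs_int n) (hmean n) i _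
    · exact (((measurable_pi_apply i).comp (hs n)).sub_const _).stronglyMeasurable
    · filter_upwards [hbdd n] with ω hω
      exact (abs_sub _ _).trans (by gcongr; exact (norm_le_pi_norm (s (n + 1) ω) i).trans hω)
  have hmargin : Tendsto (fun e0 : ℝ => e0 / τ - K) atTop atTop :=
    tendsto_atTop_add_const_right _ _ (tendsto_id.atTop_div_const hτ)
  refine ⟨v, hv, tendsto_measure_one_of_tendsto_measure_zero
    (fun i => (hwalk i).comp hmargin) fun e0 ω hω n i => ?_⟩
  exact energyVec_nonneg_of_lt_sum hτ (hvK n i) (not_le.1 fun h => hω i ⟨n, h⟩)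

/-- The history of the slots, against which (D1) is conditioned: at time `n` it is generated by
`s 1, …, s n`, since slots are numbered from `1`. -/
def slotFiltration {E : Type*} [MeasurableSpace E] {s : ℕ → Ω → E} (hs : ∀ n, Measurable (s n)) :
    Filtration ℕ m0 where
  seq n := ⨆ i ∈ Icc 1 n, MeasurableSpace.comap (s i) inferInstance
  mono' _ _ h := biSup_mono fun _ hi => Icc_subset_Icc_right h hi
  le' _ := iSup₂_le fun i _ => (hs i).comap_le

lemma measurable_slotFiltration {E : Type*} [MeasurableSpace E] {s : ℕ → Ω → E}
    (hs : ∀ n, Measurable (s n)) (n : ℕ) : Measurable[slotFiltration hs (n + 1)] (s (n + 1)) :=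
  measurable_iff_comap_le.2 <|
    le_biSup (fun i => MeasurableSpace.comap (s i) inferInstance) (right_mem_Icc.2 (by lia))

end Lifetime

/-- If the optimal LP value `f* < 0` and (D1), (D2) hold, then
`P(N_opt = ∞) → 1` as `e0 → ∞`. -/
theorem optimal_lifetime_infinite_of_fstar_neg
    {M : ℕ} (hM : 2 ≤ M)
    (τ : ℝ) (hτ : 0 < τ)
    (C : Matrix (Fin M) (Fin M) ℝ) (hC : ∀ i j, 0 ≤ C i j)
    (sbar : Fin M → ℝ) (S : ℝ) (hS : 0 < S)
    (hsbarS : ∀ m, 0 ≤ sbar m ∧ sbar m ≤ S)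
    (fstar : ℝ) (hfstar : fstar < 0)
    -- `f*` is attained by a feasible point of the auxiliary LP (with `R = C − s̄·uᵀ`)
    (hattain : ∃ vbar : Fin M → ℝ, (∀ m, 0 ≤ vbar m) ∧ (∑ m, vbar m) = 1 ∧
      ∀ m, (C - Matrix.of fun i _ => sbar i).mulVec vbar m ≤ fstar)
    -- and is optimal for it
    (hopt : ∀ (vbar : Fin M → ℝ) (f : ℝ), (∀ m, 0 ≤ vbar m) → (∑ m, vbar m) = 1 →
      (∀ m, (C - Matrix.of fun i _ => sbar i).mulVec vbar m ≤ f) → fstar ≤ f)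
    {Ω : Type*} {m0 : MeasurableSpace Ω} (μ : Measure Ω) [IsProbabilityMeasure μ]
    (s : ℕ → Ω → Fin M → ℝ) (hmeas : ∀ n, Measurable (s n))
    -- (D1): constant conditional expectation given the past
    (hD1 : ∀ n, 1 ≤ n →
      (μ[s n | ⨆ i ∈ Finset.Icc 1 (n-1), MeasurableSpace.comap (s i) inferInstance]
        =ᵐ[μ] (fun _ => sbar)))
    -- (D2): boundedness
    (hD2 : ∀ n, 1 ≤ n → ∀ᵐ ω ∂μ, ∀ m, 0 ≤ s n ω m ∧ s n ω m ≤ S) :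
    Tendsto (fun e0 : ℝ => μ {ω | Nopt τ C e0 (fun t => s t ω) = ⊤})
      atTop (nhds 1) := by
  obtain ⟨p, hp0, hp1, hpf⟩ := hattain
  have hfeas (i : Fin M) : (C *ᵥ p) i < sbar i := by
    rw [← sub_neg, ← Pi.sub_apply, ← sub_of_const_mulVec C sbar hp1]
    exact (hpf i).trans_lt hfstar
  have hbdd (n : ℕ) : ∀ᵐ ω ∂μ, ‖s (n + 1) ω‖ ≤ S := by
    filter_upwards [hD2 (n + 1) n.succ_pos] with ω hω
    exact (pi_norm_le_iff_of_nonneg hS.le).2 fun i => (abs_of_nonneg (hω i).1).trans_le (hω i).2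
  obtain ⟨v, hv, hlim⟩ := optimal_lifetime_infinite_of_fstar_neg_general hτ ⟨hp0, hp1⟩ hfeas
    (measurable_slotFiltration hmeas) (fun n => (hD1 (n + 1) n.succ_pos).symm.le) hbdd
  exact tendsto_of_tendsto_of_tendsto_of_le_of_le hlim tendsto_const_nhds
    (fun _ => measure_mono fun _ hω => Nopt_eq_top_of_energyVec_nonneg hv hω) fun _ => prob_le_one
end

section
/- Suppose assumptions (D1) and (D2) on the recharge rates hold, and in addition (D3) C_{ij} − s̄_i < 0 for all i ≠ j, and (D4) C is invertible with (Cᵀ)⁻¹·u > 0 componentwise. If the optimal value f* of the auxiliary linear program satisfies f* < 0, then for every constant K > 0 and every HEF process, lim_{e0 → ∞} P(N_hef > K·e0) = 1. -/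
open MeasureTheory Filter Finset Matrix

/-- The lifetime of a given decision sequence: the smallest `n ≥ 1` such that some
component of `e^(n+1)` is negative, `∞` if no such `n` exists. -/
noncomputable def lifetime {M : ℕ} (τ : ℝ) (C : Matrix (Fin M) (Fin M) ℝ)
    (e0 : ℝ) (s v : ℕ → Fin M → ℝ) : ℕ∞ :=
  sInf {x : ℕ∞ | ∃ n : ℕ, x = (n : ℕ∞) ∧ 1 ≤ n ∧ ∃ m, energyVec τ C e0 s v (n+1) m < 0}

/-! The energy vector is `e0·u` plus `τ` times the accumulated recharge fluctuation minus
`τ·R·a`, where `a` counts the activations. `R` has nonpositive off-diagonal entries and, since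
`f* < 0`, some nonzero `x ≥ 0` satisfies `R·x ≤ 0`; comparing with `x` shows that `R·y > 0` is
impossible for `y ≥ 0`. So up to fluctuations some station has always kept its initial energy, hence
so has the active one, which has the highest energy. Passive stations lose nothing in the mean, so
each station's energy is controlled by its value at its last activation. By the maximal inequality
for square-integrable martingales the fluctuations up to time `K·e0` are of order `√e0`, which is
negligible against `e0`. -/

theorem exists_mulVec_apply_nonpos {ι 𝕜 : Type*} [Fintype ι] [Field 𝕜] [LinearOrder 𝕜]
    [IsStrictOrderedRing 𝕜] {A : Matrix ι ι 𝕜} (hA : ∀ i j, i ≠ j → A i j ≤ 0)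
    {x : ι → 𝕜} (hx : 0 ≤ x) (hx0 : x ≠ 0) (hAx : A *ᵥ x ≤ 0) {y : ι → 𝕜} (hy : 0 ≤ y) :
    ∃ i, (A *ᵥ y) i ≤ 0 := by
  by_contra! hAy
  have hy_pos (i) : 0 < y i := by
    refine (hy i).lt_of_ne' fun hyi => (hAy i).not_ge (Finset.sum_nonpos fun j _ => ?_)
    obtain rfl | hij := eq_or_ne i j
    · simp [hyi]
    · exact mul_nonpos_of_nonpos_of_nonneg (hA i j hij) (hy j)
  obtain ⟨k, hk⟩ := Function.ne_iff.1 hx0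
  obtain ⟨i, -, hi⟩ := Finset.univ.exists_max_image (fun j => x j / y j) ⟨k, Finset.mem_univ k⟩
  have hxi : 0 < x i := by
    have := (div_pos ((hx k).lt_of_ne' hk) (hy_pos k)).trans_le (hi k (Finset.mem_univ k))
    exact (div_pos_iff_of_pos_right (hy_pos i)).1 this
  -- At a maximiser of `x / y`, only nonpositive off-diagonal terms survive in this combination.
  have hcomb : x i * (A *ᵥ y) i - y i * (A *ᵥ x) i ≤ 0 := by
    simp only [Matrix.mulVec, dotProduct, Finset.mul_sum, ← Finset.sum_sub_distrib]
    refine Finset.sum_nonpos fun j _ => ?_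
    obtain rfl | hij := eq_or_ne i j
    · exact (by ring : x i * (A i i * y i) - y i * (A i i * x i) = 0).le
    · have hratio : x j * y i ≤ x i * y j :=
        (div_le_div_iff₀ (hy_pos j) (hy_pos i)).1 (hi j (Finset.mem_univ j))
      calc x i * (A i j * y j) - y i * (A i j * x j)
          = A i j * (x i * y j - x j * y i) := by ring
        _ ≤ 0 := mul_nonpos_of_nonpos_of_nonneg (hA i j hij) (sub_nonneg.2 hratio)
  linarith [mul_pos hxi (hAy i), mul_nonpos_of_nonneg_of_nonpos (hy i) (hAx i)]

section Deterministic

variable {M : ℕ} {τ e0 : ℝ} {C : Matrix (Fin M) (Fin M) ℝ} {sbar : Fin M → ℝ}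
  {s v : ℕ → Fin M → ℝ}

/-- The matrix `R = C − s̄·uᵀ` of the auxiliary linear program: `R i j` is the expected net energy
loss rate of base station `i` when base station `j` is active. -/
def netConsumption (C : Matrix (Fin M) (Fin M) ℝ) (sbar : Fin M → ℝ) :
    Matrix (Fin M) (Fin M) ℝ :=
  C - Matrix.of fun i _ => sbar i

/-- The accumulated deviation `Σ_{t=1}^n (s^(t) − s̄)` of the recharge rates from their mean. -/
def fluctuation (sbar : Fin M → ℝ) (s : ℕ → Fin M → ℝ) (n : ℕ) (m : Fin M) : ℝ :=
  ∑ t ∈ Finset.Icc 1 n, (s t m - sbar m)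

/-- The vector `Σ_{t=1}^n v^(t)` counting the slots up to `n` in which each base station was
active. -/
def activity (v : ℕ → Fin M → ℝ) (n : ℕ) : Fin M → ℝ :=
  ∑ t ∈ Finset.Icc 1 n, v t

/-- A realisation of an HEF process: from slot `1` on, `v` is a decision vector activating a base
station of highest available energy. The entry `v 0` is irrelevant. -/
def IsHighestEnergyFirst (τ : ℝ) (C : Matrix (Fin M) (Fin M) ℝ) (e0 : ℝ)
    (s v : ℕ → Fin M → ℝ) : Prop :=
  ∀ n, IsDecision (v (n + 1)) ∧
    ∀ m, v (n + 1) m = 1 → ∀ l, energyVec τ C e0 s v n l ≤ energyVec τ C e0 s v n m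

theorem IsDecision.nonneg {x : Fin M → ℝ} (hx : IsDecision x) : 0 ≤ x := fun m => by
  rcases hx.1 m with h | h <;> simp [h]

theorem IsDecision.exists_eq_single {x : Fin M → ℝ} (hx : IsDecision x) :
    ∃ j, x = Pi.single j 1 := by
  obtain ⟨j, -, hj⟩ : ∃ j ∈ Finset.univ, x j ≠ 0 :=
    Finset.exists_ne_zero_of_sum_ne_zero (by simp [hx.2])
  have hxj : x j = 1 := (hx.1 j).resolve_left hj
  refine ⟨j, funext fun m => ?_⟩
  obtain rfl | hmj := eq_or_ne m j
  · simp [hxj]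
  have hrest : ∑ i ∈ Finset.univ.erase j, x i = 0 := by
    linarith [Finset.add_sum_erase Finset.univ x (Finset.mem_univ j), hx.2]
  simpa [hmj] using (Finset.sum_eq_zero_iff_of_nonneg fun i _ => hx.nonneg i).1 hrest m
    (Finset.mem_erase.2 ⟨hmj, Finset.mem_univ m⟩)

theorem netConsumption_mulVec_apply (x : Fin M → ℝ) (m : Fin M) :
    (netConsumption C sbar *ᵥ x) m = (C *ᵥ x) m - sbar m * ∑ j, x j := by
  simp [netConsumption, Matrix.mulVec, dotProduct, sub_mul, Finset.mul_sum]

theorem fluctuation_succ (sbar : Fin M → ℝ) (s : ℕ → Fin M → ℝ) (n : ℕ) (m : Fin M) :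
    fluctuation sbar s (n + 1) m = fluctuation sbar s n m + (s (n + 1) m - sbar m) :=
  Finset.sum_Icc_succ_top (by lia) _

theorem activity_succ (v : ℕ → Fin M → ℝ) (n : ℕ) :
    activity v (n + 1) = activity v n + v (n + 1) :=
  Finset.sum_Icc_succ_top (by lia) v

theorem activity_nonneg (hv : ∀ n, IsDecision (v (n + 1))) (n : ℕ) : 0 ≤ activity v n := by
  induction n with
  | zero => simp [activity]
  | succ n ih => exact activity_succ v n ▸ add_nonneg ih (hv n).nonneg

theorem sum_activity (hv : ∀ n, IsDecision (v (n + 1))) (n : ℕ) : ∑ m, activity v n m = n := by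
  induction n with
  | zero => simp [activity]
  | succ n ih => simp [activity_succ, Finset.sum_add_distrib, ih, (hv n).2]

theorem energyVec_eq_add_fluctuation_sub (sbar : Fin M → ℝ) (hv : ∀ n, IsDecision (v (n + 1)))
    (n : ℕ) (m : Fin M) :
    energyVec τ C e0 s v n m =
      e0 + τ * fluctuation sbar s n m - τ * (netConsumption C sbar *ᵥ activity v n) m := by
  rw [netConsumption_mulVec_apply, sum_activity hv, fluctuation, Finset.sum_sub_distrib, energyVec,
    activity]
  simp
  ring

namespace IsHighestEnergyFirst

theorem isDecision (hv : IsHighestEnergyFirst τ C e0 s v) (n : ℕ) : IsDecision (v (n + 1)) :=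
  (hv n).1

theorem le_energyVec_of_active (hv : IsHighestEnergyFirst τ C e0 s v) (hτ : 0 ≤ τ)
    (hR : ∀ i j, i ≠ j → netConsumption C sbar i j ≤ 0)
    (hfeas : ∃ x, 0 ≤ x ∧ x ≠ 0 ∧ netConsumption C sbar *ᵥ x ≤ 0)
    {b : ℝ} {n : ℕ} (hb : ∀ m, |fluctuation sbar s n m| ≤ b) {j : Fin M} (hj : v (n + 1) j = 1) :
    e0 - τ * b ≤ energyVec τ C e0 s v n j := by
  obtain ⟨x, hx, hx0, hRx⟩ := hfeas
  obtain ⟨i, hi⟩ := exists_mulVec_apply_nonpos hR hx hx0 hRx (activity_nonneg hv.isDecision n)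
  calc e0 - τ * b
      ≤ e0 + τ * fluctuation sbar s n i - τ * (netConsumption C sbar *ᵥ activity v n) i := by
        linarith [mul_le_mul_of_nonneg_left (abs_le.1 (hb i)).1 hτ,
          mul_nonpos_of_nonneg_of_nonpos hτ hi]
    _ = energyVec τ C e0 s v n i :=
        (energyVec_eq_add_fluctuation_sub sbar hv.isDecision n i).symm
    _ ≤ energyVec τ C e0 s v n j := (hv n).2 j hj i

theorem netConsumption_mulVec_activity_le (hv : IsHighestEnergyFirst τ C e0 s v) (hτ : 0 < τ)
    (hR : ∀ i j, i ≠ j → netConsumption C sbar i j ≤ 0)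
    (hfeas : ∃ x, 0 ≤ x ∧ x ≠ 0 ∧ netConsumption C sbar *ᵥ x ≤ 0)
    {c : ℝ} (hc : 0 ≤ c) (hdiag : ∀ m, netConsumption C sbar m m ≤ c)
    {b : ℝ} {N : ℕ} (hb : ∀ n ≤ N, ∀ m, |fluctuation sbar s n m| ≤ b) (n : ℕ) (hn : n ≤ N)
    (m : Fin M) : (netConsumption C sbar *ᵥ activity v n) m ≤ 2 * b + c := by
  induction n with
  | zero =>
    have hb0 : 0 ≤ b := (abs_nonneg _).trans (hb 0 hn m)
    simpa [activity] using (by positivity : 0 ≤ 2 * b + c)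
  | succ n ih =>
    have hn' : n ≤ N := by lia
    obtain ⟨j, hj⟩ := (hv.isDecision n).exists_eq_single
    have hstep : (netConsumption C sbar *ᵥ activity v (n + 1)) m =
        (netConsumption C sbar *ᵥ activity v n) m + netConsumption C sbar m j := by
      simp [activity_succ, Matrix.mulVec_add, hj]
    rw [hstep]
    obtain rfl | hmj := eq_or_ne m j
    · have hactive := hv.le_energyVec_of_active hτ.le hR hfeas (hb n hn') (j := m) (by simp [hj])
      rw [energyVec_eq_add_fluctuation_sub sbar hv.isDecision] at hactive
      have hloss : (netConsumption C sbar *ᵥ activity v n) m ≤ b + fluctuation sbar s n m :=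
        le_of_mul_le_mul_left (by linarith) hτ
      linarith [(abs_le.1 (hb n hn' m)).2, hdiag m]
    · linarith [ih hn', hR m j hmj]

theorem le_energyVec (hv : IsHighestEnergyFirst τ C e0 s v) (hτ : 0 < τ)
    (hR : ∀ i j, i ≠ j → netConsumption C sbar i j ≤ 0)
    (hfeas : ∃ x, 0 ≤ x ∧ x ≠ 0 ∧ netConsumption C sbar *ᵥ x ≤ 0)
    {c : ℝ} (hc : 0 ≤ c) (hdiag : ∀ m, netConsumption C sbar m m ≤ c)
    {b : ℝ} {N : ℕ} (hb : ∀ n ≤ N, ∀ m, |fluctuation sbar s n m| ≤ b) (n : ℕ) (hn : n ≤ N)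
    (m : Fin M) : e0 - τ * (3 * b + c) ≤ energyVec τ C e0 s v n m := by
  have hloss := hv.netConsumption_mulVec_activity_le hτ hR hfeas hc hdiag hb n hn m
  rw [energyVec_eq_add_fluctuation_sub sbar hv.isDecision]
  linarith [mul_le_mul_of_nonneg_left hloss hτ.le,
    mul_le_mul_of_nonneg_left (abs_le.1 (hb n hn m)).1 hτ.le]

end IsHighestEnergyFirst

theorem le_lifetime {N : ℕ} (h : ∀ n ≤ N, ∀ m, 0 ≤ energyVec τ C e0 s v n m) :
    (N : ℕ∞) ≤ lifetime τ C e0 s v := by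
  refine le_sInf ?_
  rintro _ ⟨n, rfl, -, m, hm⟩
  by_contra! hlt
  exact (h (n + 1) (Nat.cast_lt.1 hlt) m).not_gt hm

theorem eq_top_or_lt_toNat_of_floor_lt {x : ℝ} {n : ℕ∞} (h : (⌊x⌋₊ : ℕ∞) < n) :
    n = ⊤ ∨ x < (n.toNat : ℝ) := by
  cases n with
  | top => exact Or.inl rfl
  | coe n => exact Or.inr (Nat.lt_of_floor_lt (Nat.cast_lt.1 h))

end Deterministic

theorem tendsto_add_natFloor_mul_div_sq_atTop (A B : ℝ) {K c : ℝ} (hK : 0 ≤ K) :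
    Tendsto (fun x : ℝ => (A + ((⌊K * x⌋₊ + 1 : ℕ) : ℝ) * B) / (c * x) ^ 2) atTop (nhds 0) := by
  have hinv : Tendsto (fun x : ℝ => x⁻¹) atTop (nhds 0) := tendsto_inv_atTop_zero
  have hlim : Tendsto (fun x : ℝ => ((A + B) * (x⁻¹ * x⁻¹) + ⌊K * x⌋₊ / x * B * x⁻¹) / c ^ 2)
      atTop (nhds 0) := by
    simpa using (((hinv.mul hinv).const_mul (A + B)).add
      (((tendsto_nat_floor_mul_div_atTop hK).mul_const B).mul hinv)).div_const (c ^ 2)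
  refine hlim.congr fun x => ?_
  push_cast
  simp only [div_eq_mul_inv, mul_pow, mul_inv]
  ring

section Probability

open scoped ProbabilityTheory

variable {Ω : Type*} {m0 : MeasurableSpace Ω} {μ : Measure Ω}

section SquareIntegrable

variable {ι : Type*} [Preorder ι] [IsFiniteMeasure μ] {ℱ : Filtration ι m0} {f : ι → Ω → ℝ}

theorem submartingale_sq_of_martingale (hf : Martingale f ℱ μ)
    (hL2 : ∀ i, MemLp (f i) 2 μ) : Submartingale (fun i => f i ^ 2) ℱ μ := by
  refine ⟨fun i => (hf.stronglyMeasurable i).pow 2, fun i j hij => ?_,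
    fun i => (hL2 i).integrable_sq⟩
  have hvar : 0 ≤ᵐ[μ] Var[f j; μ | ℱ i] := condExp_nonneg (ae_of_all _ fun ω => sq_nonneg _)
  filter_upwards [hvar, ProbabilityTheory.condVar_ae_eq_condExp_sq_sub_sq_condExp (ℱ.le i) (hL2 j),
    hf.condExp_ae_eq hij] with ω hnonneg heq hmart
  simp only [Pi.sub_apply, Pi.pow_apply, hmart] at heq
  exact sub_nonneg.1 (heq ▸ hnonneg)

theorem integral_sq_eq_add_of_martingale (hf : Martingale f ℱ μ)
    (hL2 : ∀ i, MemLp (f i) 2 μ) {i j : ι} (hij : i ≤ j) :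
    ∫ ω, f j ω ^ 2 ∂μ = ∫ ω, f i ω ^ 2 ∂μ + ∫ ω, (f j ω - f i ω) ^ 2 ∂μ := by
  have hmart := hf.condExp_ae_eq hij
  have hincr : ∫ ω, (Var[f j; μ | ℱ i]) ω ∂μ = ∫ ω, (f j ω - f i ω) ^ 2 ∂μ := by
    rw [ProbabilityTheory.condVar, integral_condExp (ℱ.le i)]
    refine integral_congr_ae ?_
    filter_upwards [hmart] with ω h
    simp [h]
  have hdiff : ∫ ω, (Var[f j; μ | ℱ i]) ω ∂μ = ∫ ω, f j ω ^ 2 ∂μ - ∫ ω, f i ω ^ 2 ∂μ := by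
    calc ∫ ω, (Var[f j; μ | ℱ i]) ω ∂μ
        = ∫ ω, ((μ[f j ^ 2 | ℱ i]) ω - f i ω ^ 2) ∂μ := by
          refine integral_congr_ae ?_
          filter_upwards [hmart, ProbabilityTheory.condVar_ae_eq_condExp_sq_sub_sq_condExp
            (ℱ.le i) (hL2 j)] with ω h heq
          simp [heq, h]
      _ = ∫ ω, f j ω ^ 2 ∂μ - ∫ ω, f i ω ^ 2 ∂μ := by
          rw [integral_sub integrable_condExp (hL2 i).integrable_sq, integral_condExp (ℱ.le i)]
          rfl
  linarith

end SquareIntegrable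

section SquareIntegrableNat

variable [IsFiniteMeasure μ] {ℱ : Filtration ℕ m0} {f : ℕ → Ω → ℝ}

theorem integral_sq_le_of_martingale (hf : Martingale f ℱ μ) (hL2 : ∀ n, MemLp (f n) 2 μ) {B : ℝ}
    (hB : ∀ n, ∫ ω, (f (n + 1) ω - f n ω) ^ 2 ∂μ ≤ B) (n : ℕ) :
    ∫ ω, f n ω ^ 2 ∂μ ≤ ∫ ω, f 0 ω ^ 2 ∂μ + n * B := by
  induction n with
  | zero => simp
  | succ n ih =>
    rw [integral_sq_eq_add_of_martingale hf hL2 n.le_succ]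
    push_cast
    linarith [hB n]

theorem measureReal_exists_le_abs_le_of_martingale (hf : Martingale f ℱ μ)
    (hL2 : ∀ n, MemLp (f n) 2 μ) (N : ℕ) {a : ℝ} (ha : 0 < a) :
    μ.real {ω | ∃ n ≤ N, a ≤ |f n ω|} ≤ (∫ ω, f N ω ^ 2 ∂μ) / a ^ 2 := by
  let E : Set Ω := {ω | a ^ 2 ≤ (range (N + 1)).sup' nonempty_range_add_one fun n => (f n ^ 2) ω}
  have hE : {ω | ∃ n ≤ N, a ≤ |f n ω|} = E := by
    ext ω
    simp [E, Finset.le_sup'_iff, sq_le_sq, abs_of_pos ha]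
  have hmax := maximal_ineq (submartingale_sq_of_martingale hf hL2) (fun n ω => sq_nonneg (f n ω))
    (ε := (a ^ 2).toNNReal) N
  have hreal : a ^ 2 * μ.real E ≤ ∫ ω in E, f N ω ^ 2 ∂μ := by
    have := ENNReal.toReal_mono ENNReal.ofReal_ne_top hmax
    rw [ENNReal.toReal_mul, ENNReal.coe_toReal, Real.coe_toNNReal _ (sq_nonneg a),
      ENNReal.toReal_ofReal] at this
    exacts [this, integral_nonneg fun ω => sq_nonneg (f N ω)]
  rw [hE, le_div_iff₀' (by positivity)]
  exact hreal.trans (setIntegral_le_integral (hL2 N).integrable_sq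
    (ae_of_all _ fun ω => sq_nonneg _))

theorem tendsto_measure_exists_le_abs_of_martingale (hf : Martingale f ℱ μ)
    (hL2 : ∀ n, MemLp (f n) 2 μ) {B : ℝ}
    (hB : ∀ n, ∫ ω, (f (n + 1) ω - f n ω) ^ 2 ∂μ ≤ B) {K c : ℝ} (hK : 0 ≤ K) (hc : 0 < c) :
    Tendsto (fun x : ℝ => μ {ω | ∃ n ≤ ⌊K * x⌋₊ + 1, c * x ≤ |f n ω|}) atTop (nhds 0) := by
  rw [← ENNReal.tendsto_toReal_iff (fun _ => measure_ne_top _ _) ENNReal.zero_ne_top]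
  refine squeeze_zero' (.of_forall fun _ => ENNReal.toReal_nonneg) ?_
    (tendsto_add_natFloor_mul_div_sq_atTop (∫ ω, f 0 ω ^ 2 ∂μ) B (c := c) hK)
  filter_upwards [eventually_gt_atTop 0] with x hx
  refine (measureReal_exists_le_abs_le_of_martingale hf hL2 _ (by positivity)).trans ?_
  gcongr
  exact integral_sq_le_of_martingale hf hL2 hB _

end SquareIntegrableNat

theorem martingale_sum_Icc {E : Type*} [NormedAddCommGroup E] [NormedSpace ℝ E] [CompleteSpace E]
    [IsFiniteMeasure μ] {ℱ : Filtration ℕ m0} {X : ℕ → Ω → E}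
    (hX : ∀ n, StronglyMeasurable[ℱ (n + 1)] (X (n + 1)))
    (hint : ∀ n, Integrable (X (n + 1)) μ) (hmean : ∀ n, μ[X (n + 1) | ℱ n] =ᵐ[μ] 0) :
    Martingale (fun n ω => ∑ t ∈ Finset.Icc 1 n, X t ω) ℱ μ := by
  refine martingale_of_condExp_sub_eq_zero_nat (fun n => ?_) (fun n => ?_) fun n => ?_
  · refine Finset.stronglyMeasurable_fun_sum _ fun t ht => ?_
    obtain ⟨ht1, htn⟩ := Finset.mem_Icc.1 ht
    obtain ⟨t, rfl⟩ := Nat.exists_eq_add_of_le' ht1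
    exact (hX t).mono (ℱ.mono htn)
  · refine integrable_finsetSum _ fun t ht => ?_
    obtain ⟨t, rfl⟩ := Nat.exists_eq_add_of_le' (Finset.mem_Icc.1 ht).1
    exact hint t
  · have hincr : (fun ω => ∑ t ∈ Finset.Icc 1 (n + 1), X t ω) -
        (fun ω => ∑ t ∈ Finset.Icc 1 n, X t ω) = X (n + 1) := by
      funext ω
      simp [Finset.sum_Icc_succ_top]
    exact hincr ▸ hmean n

theorem condExp_apply_ae_eq {ι : Type*} [Fintype ι] {m : MeasurableSpace Ω} {X : Ω → ι → ℝ}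
    (hX : Integrable X μ) (i : ι) : μ[fun ω => X ω i | m] =ᵐ[μ] fun ω => (μ[X | m]) ω i :=
  (ContinuousLinearMap.comp_condExp_comm hX (ContinuousLinearMap.proj (R := ℝ) i)).symm

theorem tendsto_measure_one_of_compl_subset [IsProbabilityMeasure μ] {α : Type*} {l : Filter α}
    {bad good : α → Set Ω} (hbad : Tendsto (fun a => μ (bad a)) l (nhds 0))
    (hsub : ∀ᶠ a in l, (bad a)ᶜ ⊆ good a) : Tendsto (fun a => μ (good a)) l (nhds 1) := by
  have hlow : Tendsto (fun a => 1 - μ (bad a)) l (nhds 1) := by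
    simpa using ENNReal.Tendsto.sub tendsto_const_nhds hbad (Or.inl ENNReal.one_ne_top)
  refine tendsto_of_tendsto_of_tendsto_of_le_of_le' hlow tendsto_const_nhds ?_
    (.of_forall fun _ => prob_le_one)
  filter_upwards [hsub] with a ha
  rw [tsub_le_iff_left]
  calc (1 : ENNReal) = μ Set.univ := measure_univ.symm
    _ ≤ μ (bad a ∪ good a) := measure_mono fun ω _ => or_iff_not_imp_left.2 (@ha ω)
    _ ≤ μ (bad a) + μ (good a) := measure_union_le _ _

theorem tendsto_measure_exists_of_forall {ι α : Type*} [Finite ι] {l : Filter α}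
    {p : ι → α → Ω → Prop} (h : ∀ i, Tendsto (fun a => μ {ω | p i a ω}) l (nhds 0)) :
    Tendsto (fun a => μ {ω | ∃ i, p i a ω}) l (nhds 0) := by
  cases nonempty_fintype ι
  have hsum : Tendsto (fun a => ∑ i, μ {ω | p i a ω}) l (nhds 0) := by
    simpa using tendsto_finsetSum Finset.univ fun i _ => h i
  refine tendsto_of_tendsto_of_tendsto_of_le_of_le tendsto_const_nhds hsum (fun _ => zero_le)
    fun a => ?_
  simpa only [Set.ofPred_exists] using measure_iUnion_fintype_le μ fun i => {ω | p i a ω}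

/-- The filtration `σ(s^(1), …, s^(n))` generated by the recharge rates; its value at `0` is
trivial since `s 0` is not observed. -/
def rechargeFiltration {E : Type*} [MeasurableSpace E] (s : ℕ → Ω → E)
    (hs : ∀ n, Measurable (s n)) : Filtration ℕ m0 where
  seq n := ⨆ i ∈ Finset.Icc 1 n, MeasurableSpace.comap (s i) inferInstance
  mono' _ _ hab := biSup_mono fun _ hi => Finset.Icc_subset_Icc le_rfl hab hi
  le' _ := iSup₂_le fun i _ => (hs i).comap_le

theorem measurable_rechargeFiltration {E : Type*} [MeasurableSpace E] {s : ℕ → Ω → E}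
    (hs : ∀ n, Measurable (s n)) (n : ℕ) :
    Measurable[rechargeFiltration s hs (n + 1)] (s (n + 1)) :=
  (comap_measurable _).mono (le_iSup₂_of_le (n + 1) (by simp) le_rfl) le_rfl

section Fluctuation

variable {M : ℕ} {ℱ : Filtration ℕ m0} {s : ℕ → Ω → Fin M → ℝ}
  {sbar : Fin M → ℝ}

theorem martingale_fluctuation [IsFiniteMeasure μ]
    (hadapted : ∀ n, StronglyMeasurable[ℱ (n + 1)] (s (n + 1)))
    (hint : ∀ n, Integrable (s (n + 1)) μ)
    (hmean : ∀ n, μ[s (n + 1) | ℱ n] =ᵐ[μ] fun _ => sbar) (m : Fin M) :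
    Martingale (fun n ω => fluctuation sbar (fun t => s t ω) n m) ℱ μ := by
  refine martingale_sum_Icc (X := fun t ω => s t ω m - sbar m) (fun n => ?_)
    (fun n => ((hint n).eval m).sub (integrable_const _)) fun n => ?_
  · exact ((continuous_apply m).comp_stronglyMeasurable (hadapted n)).sub stronglyMeasurable_const
  · filter_upwards [condExp_sub ((hint n).eval m) (integrable_const (sbar m)) (ℱ n),
      condExp_apply_ae_eq (m := ℱ n) (hint n) m, hmean n] with ω hsub happly hω
    rw [condExp_const (ℱ.le n), Pi.sub_apply, happly, hω] at hsub
    exact hsub.trans (sub_self _)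

theorem memLp_fluctuation [IsFiniteMeasure μ] (hL2 : ∀ n, MemLp (s (n + 1)) 2 μ) (n : ℕ)
    (m : Fin M) : MemLp (fun ω => fluctuation sbar (fun t => s t ω) n m) 2 μ := by
  refine memLp_finsetSum _ fun t ht => ?_
  obtain ⟨t, rfl⟩ := Nat.exists_eq_add_of_le' (Finset.mem_Icc.1 ht).1
  exact ((hL2 t).eval m).sub (memLp_const _)

theorem integral_fluctuation_succ_sub_sq [IsProbabilityMeasure μ]
    (hL2 : ∀ n, MemLp (s (n + 1)) 2 μ)
    (hmean : ∀ n, μ[s (n + 1) | ℱ n] =ᵐ[μ] fun _ => sbar) (n : ℕ) (m : Fin M) :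
    ∫ ω, (fluctuation sbar (fun t => s t ω) (n + 1) m -
      fluctuation sbar (fun t => s t ω) n m) ^ 2 ∂μ = Var[fun ω => s (n + 1) ω m; μ] := by
  have hexp : ∫ ω, s (n + 1) ω m ∂μ = sbar m := by
    have hcond : μ[fun ω => s (n + 1) ω m | ℱ n] =ᵐ[μ] fun _ => sbar m := by
      filter_upwards [condExp_apply_ae_eq (m := ℱ n) ((hL2 n).integrable one_le_two) m, hmean n]
        with ω happly hω
      rw [happly, hω]
    rw [← integral_condExp (ℱ.le n), integral_congr_ae hcond]
    simp
  rw [ProbabilityTheory.variance_eq_integral ((hL2 n).eval m).aemeasurable, hexp]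
  simp [fluctuation_succ]

theorem tendsto_measure_exists_le_abs_fluctuation [IsProbabilityMeasure μ]
    (hadapted : ∀ n, StronglyMeasurable[ℱ (n + 1)] (s (n + 1)))
    (hL2 : ∀ n, MemLp (s (n + 1)) 2 μ)
    (hmean : ∀ n, μ[s (n + 1) | ℱ n] =ᵐ[μ] fun _ => sbar)
    {B : ℝ} (hvar : ∀ n m, Var[fun ω => s (n + 1) ω m; μ] ≤ B)
    {K c : ℝ} (hK : 0 ≤ K) (hc : 0 < c) :
    Tendsto (fun x : ℝ => μ {ω | ∃ m, ∃ n ≤ ⌊K * x⌋₊ + 1,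
      c * x ≤ |fluctuation sbar (fun t => s t ω) n m|}) atTop (nhds 0) :=
  tendsto_measure_exists_of_forall fun m => tendsto_measure_exists_le_abs_of_martingale
    (martingale_fluctuation hadapted (fun n => (hL2 n).integrable one_le_two) hmean m)
    (fun n => memLp_fluctuation hL2 n m)
    (fun n => (integral_fluctuation_succ_sub_sq hL2 hmean n m).trans_le (hvar n m)) hK hc

end Fluctuation

theorem hef_lifetime_exceeds_of_fstar_neg_general
    {M : ℕ} {τ : ℝ} (hτ : 0 < τ) {C : Matrix (Fin M) (Fin M) ℝ} {sbar : Fin M → ℝ}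
    (hR : ∀ i j, i ≠ j → netConsumption C sbar i j ≤ 0)
    (hfeas : ∃ x, 0 ≤ x ∧ x ≠ 0 ∧ netConsumption C sbar *ᵥ x ≤ 0)
    [IsProbabilityMeasure μ] {ℱ : Filtration ℕ m0} {s : ℕ → Ω → Fin M → ℝ}
    (hadapted : ∀ n, StronglyMeasurable[ℱ (n + 1)] (s (n + 1)))
    (hL2 : ∀ n, MemLp (s (n + 1)) 2 μ)
    (hmean : ∀ n, μ[s (n + 1) | ℱ n] =ᵐ[μ] fun _ => sbar)
    {B : ℝ} (hvar : ∀ n m, Var[fun ω => s (n + 1) ω m; μ] ≤ B)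
    {v : ℝ → ℕ → Ω → Fin M → ℝ}
    (hv : ∀ e0 ω, IsHighestEnergyFirst τ C e0 (fun t => s t ω) (fun t => v e0 t ω))
    {K : ℝ} (hK : 0 ≤ K) :
    Tendsto (fun e0 : ℝ => μ {ω |
        lifetime τ C e0 (fun t => s t ω) (fun t => v e0 t ω) = ⊤ ∨
        K * e0 < ((lifetime τ C e0 (fun t => s t ω) (fun t => v e0 t ω)).toNat : ℝ)})
      atTop (nhds 1) := by
  let c := ∑ m, |netConsumption C sbar m m|
  have hc : 0 ≤ c := Finset.sum_nonneg fun m _ => abs_nonneg _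
  have hdiag (m) : netConsumption C sbar m m ≤ c := (le_abs_self _).trans <|
    Finset.single_le_sum (f := fun m => |netConsumption C sbar m m|) (fun i _ => abs_nonneg _)
      (Finset.mem_univ m)
  -- Fluctuations below `e0 / (6τ)` cost at most half of the initial energy.
  refine tendsto_measure_one_of_compl_subset (tendsto_measure_exists_le_abs_fluctuation
    hadapted hL2 hmean hvar hK (by positivity : 0 < 1 / (6 * τ))) ?_
  filter_upwards [eventually_ge_atTop (2 * (τ * c))] with e0 he0 ω hω
  have hsmall : ∀ n ≤ ⌊K * e0⌋₊ + 1, ∀ m,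
      |fluctuation sbar (fun t => s t ω) n m| ≤ 1 / (6 * τ) * e0 := fun n hn m =>
    le_of_not_ge fun h => hω ⟨m, n, hn, h⟩
  have hscale : τ * (3 * (1 / (6 * τ) * e0) + c) = e0 / 2 + τ * c := by
    field_simp
    ring
  have henergy : ∀ n ≤ ⌊K * e0⌋₊ + 1, ∀ m,
      0 ≤ energyVec τ C e0 (fun t => s t ω) (fun t => v e0 t ω) n m := fun n hn m => by
    linarith [(hv e0 ω).le_energyVec hτ hR hfeas hc hdiag hsmall n hn m]
  exact eq_top_or_lt_toNat_of_floor_lt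
    ((Nat.cast_lt.2 (Nat.lt_succ_self _)).trans_le (le_lifetime henergy))

end Probability

/-- If `f* < 0` and (D1)–(D4) hold, then for any constant `K > 0` and any HEF process,
`P(N_hef > K·e0) → 1` as `e0 → ∞`. -/
theorem hef_lifetime_exceeds_of_fstar_neg
    {M : ℕ} (hM : 2 ≤ M)
    (τ : ℝ) (hτ : 0 < τ)
    (C : Matrix (Fin M) (Fin M) ℝ) (hC : ∀ i j, 0 ≤ C i j)
    (sbar : Fin M → ℝ) (S : ℝ) (hS : 0 < S)
    (hsbarS : ∀ m, 0 ≤ sbar m ∧ sbar m ≤ S)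
    (fstar : ℝ) (hfstar : fstar < 0)
    -- `f*` is attained by a feasible point of the auxiliary LP (with `R = C − s̄·uᵀ`)
    (hattain : ∃ vbar : Fin M → ℝ, (∀ m, 0 ≤ vbar m) ∧ (∑ m, vbar m) = 1 ∧
      ∀ m, (C - Matrix.of fun i _ => sbar i).mulVec vbar m ≤ fstar)
    -- and is optimal for it
    (hopt : ∀ (vbar : Fin M → ℝ) (f : ℝ), (∀ m, 0 ≤ vbar m) → (∑ m, vbar m) = 1 →
      (∀ m, (C - Matrix.of fun i _ => sbar i).mulVec vbar m ≤ f) → fstar ≤ f)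
    -- (D3): every passive BS gains energy in expectation
    (hD3 : ∀ i j, i ≠ j → C i j - sbar i < 0)
    -- (D4): `C` is invertible with `(Cᵀ)⁻¹·u > 0` componentwise
    (hCdet : IsUnit C.det)
    (hD4 : ∀ m, 0 < (Matrix.transpose C)⁻¹.mulVec (fun _ => (1 : ℝ)) m)
    {Ω : Type*} {m0 : MeasurableSpace Ω} (μ : Measure Ω) [IsProbabilityMeasure μ]
    (s : ℕ → Ω → Fin M → ℝ) (hmeas : ∀ n, Measurable (s n))
    -- (D1): constant conditional expectation given the past
    (hD1 : ∀ n, 1 ≤ n →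
      (μ[s n | ⨆ i ∈ Finset.Icc 1 (n-1), MeasurableSpace.comap (s i) inferInstance]
        =ᵐ[μ] (fun _ => sbar)))
    -- (D2): boundedness
    (hD2 : ∀ n, 1 ≤ n → ∀ᵐ ω ∂μ, ∀ m, 0 ≤ s n ω m ∧ s n ω m ≤ S)
    (K : ℝ) (hK : 0 < K)
    -- an HEF process:
    (v : ℕ → Ω → Fin M → ℝ)
    (hvdec : ∀ n ω, IsDecision (v n ω))
    -- each `v^(n)` is measurable w.r.t. `σ(s^(1),…,s^(n−1))`
    (hvmeas : ∀ n, 1 ≤ n →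
      Measurable[⨆ i ∈ Finset.Icc 1 (n-1), MeasurableSpace.comap (s i) inferInstance] (v n))
    -- highest-energy-first selection rule
    (hvhef : ∀ (e0 : ℝ) (n : ℕ), 1 ≤ n → ∀ (ω : Ω) (m : Fin M), v n ω m = 1 →
      ∀ l, energyVec τ C e0 (fun t => s t ω) (fun t => v t ω) (n-1) l ≤
           energyVec τ C e0 (fun t => s t ω) (fun t => v t ω) (n-1) m) :
    Tendsto (fun e0 : ℝ => μ {ω |
        lifetime τ C e0 (fun t => s t ω) (fun t => v t ω) = ⊤ ∨
        K * e0 < ((lifetime τ C e0 (fun t => s t ω) (fun t => v t ω)).toNat : ℝ)})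
      atTop (nhds 1) := by
  obtain ⟨x, hx, hx_sum, hRx⟩ := hattain
  have hbounded (n m) : ∀ᵐ ω ∂μ, s (n + 1) ω m ∈ Set.Icc 0 S := by
    filter_upwards [hD2 (n + 1) n.succ_pos] with ω hω using hω m
  exact hef_lifetime_exceeds_of_fstar_neg_general hτ (fun i j hij => (hD3 i j hij).le)
    ⟨x, hx, fun hx0 => by simp [hx0] at hx_sum, fun m => (hRx m).trans hfstar.le⟩
    (fun n => (measurable_rechargeFiltration hmeas n).stronglyMeasurable)
    (fun n => MemLp.of_eval fun m => memLp_of_bounded (hbounded n m)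
      (hmeas (n + 1)).eval.aestronglyMeasurable 2)
    (fun n => hD1 (n + 1) n.succ_pos)
    (fun n m => ProbabilityTheory.variance_le_sq_of_bounded (hbounded n m)
      (hmeas (n + 1)).eval.aemeasurable)
    (fun e0 ω n => ⟨hvdec (n + 1) ω, hvhef e0 (n + 1) n.succ_pos ω⟩) hK.le
end

section
/- Suppose C is invertible with (Cᵀ)⁻¹·u ≥ 0 componentwise, 1 − uᵀ·C⁻¹·s̄ ≠ 0, R = C − s̄·uᵀ is invertible, and either R⁻¹·u ≥ 0 componentwise or R⁻¹·u ≤ 0 componentwise. Then uᵀ·R⁻¹·u ≠ 0 and the pair v̄* = R⁻¹·u / (uᵀ·R⁻¹·u), f* = 1 / (uᵀ·R⁻¹·u) is an optimal solution of the auxiliary linear program: v̄* ≥ 0, uᵀ·v̄* = 1, R·v̄* = f*·u, and every (v̄, f) with v̄ ≥ 0, uᵀ·v̄ = 1, and R·v̄ ≤ f·u satisfies f ≥ f*. -/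
open Matrix Finset

/-!
Linear programming duality, with prices `y ≥ 0` on the rows of `R`. If `y R = c uᵀ` and `R v ≤ f b`
with `u ⬝ᵥ v = 1`, then `c = y R v ≤ f (y ⬝ᵥ b)`; and if `R w = b`, computing `y R w` in two ways
gives `c (u ⬝ᵥ w) = y ⬝ᵥ b`, so that the lower bound `c / (y ⬝ᵥ b)` on `f` is the value
`1 / (u ⬝ᵥ w)` attained at `w / (u ⬝ᵥ w)`. For `R = C - s uᵀ` the row vector `y = uᵀ C⁻¹` serves as
prices, with `c = 1 - uᵀ C⁻¹ s`.
-/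

theorem dotProduct_mulVec_of_vecMul_eq_smul {m n 𝕜 : Type*} [Fintype m] [Fintype n] [Semiring 𝕜]
    {R : Matrix m n 𝕜} {y : m → 𝕜} {u : n → 𝕜} {c : 𝕜} (hyR : y ᵥ* R = c • u) (v : n → 𝕜) :
    y ⬝ᵥ R *ᵥ v = c * (u ⬝ᵥ v) := by
  rw [dotProduct_mulVec, hyR, smul_dotProduct, smul_eq_mul]

section OrderedSemiring

variable {m n 𝕜 : Type*} [Fintype m] [PartialOrder 𝕜]

theorem dotProduct_pos_of_pos_of_forall_pos [Semiring 𝕜] [IsStrictOrderedRing 𝕜] {v w : m → 𝕜}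
    (hv : 0 < v) (hw : ∀ i, 0 < w i) : 0 < v ⬝ᵥ w := by
  obtain ⟨hv_nonneg, i, hvi⟩ := Pi.lt_def.1 hv
  exact sum_pos' (fun j _ => mul_nonneg (hv_nonneg j) (hw j).le) ⟨i, mem_univ i, mul_pos hvi (hw i)⟩

theorem le_mul_dotProduct_of_vecMul_eq_smul [Fintype n] [CommSemiring 𝕜] [IsOrderedRing 𝕜]
    {R : Matrix m n 𝕜} {b y : m → 𝕜} {u v : n → 𝕜} {c f : 𝕜} (hy : 0 ≤ y) (hyR : y ᵥ* R = c • u)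
    (huv : u ⬝ᵥ v = 1) (hRv : R *ᵥ v ≤ f • b) : c ≤ f * (y ⬝ᵥ b) :=
  calc
    c = y ⬝ᵥ R *ᵥ v := by rw [dotProduct_mulVec_of_vecMul_eq_smul hyR, huv, mul_one]
    _ ≤ y ⬝ᵥ f • b := dotProduct_le_dotProduct_of_nonneg_left hRv hy
    _ = f * (y ⬝ᵥ b) := dotProduct_smul f y b

end OrderedSemiring

section CommRing

variable {n 𝕜 : Type*} [Fintype n] [DecidableEq n] [CommRing 𝕜] {C : Matrix n n 𝕜}


theorem mulVec_nonsing_inv_mulVec (hC : IsUnit C.det) (v : n → 𝕜) : C *ᵥ (C⁻¹ *ᵥ v) = v := by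
  rw [mulVec_mulVec, mul_nonsing_inv C hC, one_mulVec]

theorem vecMul_nonsing_inv_vecMul (hC : IsUnit C.det) (v : n → 𝕜) : v ᵥ* C⁻¹ ᵥ* C = v := by
  rw [vecMul_vecMul, nonsing_inv_mul C hC, vecMul_one]

theorem vecMul_nonsing_inv_ne_zero (hC : IsUnit C.det) {v : n → 𝕜} (hv : v ≠ 0) :
    v ᵥ* C⁻¹ ≠ 0 := by
  intro h
  apply hv
  rw [← vecMul_nonsing_inv_vecMul hC v, h, zero_vecMul]

theorem vecMul_nonsing_inv_vecMul_sub_vecMulVec (hC : IsUnit C.det) (s u : n → 𝕜) :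
    u ᵥ* C⁻¹ ᵥ* (C - vecMulVec s u) = (1 - u ᵥ* C⁻¹ ⬝ᵥ s) • u := by
  rw [vecMul_sub, vecMul_nonsing_inv_vecMul hC, vecMul_vecMulVec, sub_smul, one_smul]

end CommRing

section Field

variable {m n 𝕜 : Type*} [Fintype n] [Field 𝕜] [LinearOrder 𝕜] [IsStrictOrderedRing 𝕜]

theorem div_dotProduct_nonneg {u w : n → 𝕜} (hu : 0 ≤ u) (hw : 0 ≤ w ∨ w ≤ 0) (i : n) :
    0 ≤ w i / (u ⬝ᵥ w) := by
  rcases hw with hw | hw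
  · exact div_nonneg (hw i) (dotProduct_nonneg_of_nonneg hu hw)
  · have huw : u ⬝ᵥ w ≤ 0 := by
      simpa using dotProduct_le_dotProduct_of_nonneg_left hw hu
    exact div_nonneg_of_nonpos (hw i) huw

theorem one_div_dotProduct_le_of_vecMul_eq_smul [Fintype m] {R : Matrix m n 𝕜} {b y : m → 𝕜}
    {u v w : n → 𝕜} {c f : 𝕜} (hy : 0 ≤ y) (hyb : 0 < y ⬝ᵥ b) (hyR : y ᵥ* R = c • u)
    (hRw : R *ᵥ w = b) (huv : u ⬝ᵥ v = 1) (hRv : R *ᵥ v ≤ f • b) :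
    1 / (u ⬝ᵥ w) ≤ f := by
  have hc : y ⬝ᵥ b = c * (u ⬝ᵥ w) := hRw ▸ dotProduct_mulVec_of_vecMul_eq_smul hyR w
  have hc_ne : c ≠ 0 := left_ne_zero_of_mul (hc ▸ hyb).ne'
  calc
    1 / (u ⬝ᵥ w) = c / (y ⬝ᵥ b) := by rw [hc, div_mul_cancel_left₀ hc_ne, one_div]
    _ ≤ f := (div_le_iff₀ hyb).2 (le_mul_dotProduct_of_vecMul_eq_smul hy hyR huv hRv)

theorem auxiliary_LP_optimal_solution_general [DecidableEq n] {C R : Matrix n n 𝕜}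
    {b s u : n → 𝕜} (hb : ∀ i, 0 < b i) (hu : 0 < u) (hR : R = C - vecMulVec s u)
    (hC : IsUnit C.det) (hCu : 0 ≤ Cᵀ⁻¹ *ᵥ u) (hRdet : IsUnit R.det)
    (hsign : 0 ≤ R⁻¹ *ᵥ b ∨ R⁻¹ *ᵥ b ≤ 0) :
    u ⬝ᵥ R⁻¹ *ᵥ b ≠ 0 ∧
    (∀ i, 0 ≤ (R⁻¹ *ᵥ b) i / (u ⬝ᵥ R⁻¹ *ᵥ b)) ∧
    (u ⬝ᵥ fun i => (R⁻¹ *ᵥ b) i / (u ⬝ᵥ R⁻¹ *ᵥ b)) = 1 ∧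
    (∀ i, (R *ᵥ fun j => (R⁻¹ *ᵥ b) j / (u ⬝ᵥ R⁻¹ *ᵥ b)) i = 1 / (u ⬝ᵥ R⁻¹ *ᵥ b) * b i) ∧
    ∀ (v : n → 𝕜) (f : 𝕜), u ⬝ᵥ v = 1 → (∀ i, (R *ᵥ v) i ≤ f * b i) →
      1 / (u ⬝ᵥ R⁻¹ *ᵥ b) ≤ f := by
  have hRw : R *ᵥ (R⁻¹ *ᵥ b) = b := mulVec_nonsing_inv_mulVec hRdet b
  set w := R⁻¹ *ᵥ b
  have hyR : u ᵥ* C⁻¹ ᵥ* R = (1 - u ᵥ* C⁻¹ ⬝ᵥ s) • u :=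
    hR ▸ vecMul_nonsing_inv_vecMul_sub_vecMulVec hC s u
  have hy : 0 < u ᵥ* C⁻¹ := by
    rw [← transpose_nonsing_inv, mulVec_transpose] at hCu
    exact hCu.lt_of_ne' (vecMul_nonsing_inv_ne_zero hC hu.ne')
  have hyb : 0 < u ᵥ* C⁻¹ ⬝ᵥ b := dotProduct_pos_of_pos_of_forall_pos hy hb
  have huw : u ⬝ᵥ w ≠ 0 := by
    rw [← hRw, dotProduct_mulVec_of_vecMul_eq_smul hyR] at hyb
    exact right_ne_zero_of_mul hyb.ne'
  have hv : (fun i => w i / (u ⬝ᵥ w)) = (u ⬝ᵥ w)⁻¹ • w := funext fun _ => div_eq_inv_mul _ _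
  refine ⟨huw, div_dotProduct_nonneg hu.le hsign, ?_, fun i => ?_, fun v f => ?_⟩
  · rw [hv, dotProduct_smul, smul_eq_mul, inv_mul_cancel₀ huw]
  · rw [hv, mulVec_smul, hRw, one_div, Pi.smul_apply, smul_eq_mul]
  · exact one_div_dotProduct_le_of_vecMul_eq_smul hy.le hyb hyR hRw

end Field

/-- Optimal solution of the auxiliary LP: under (D4)-type conditions and a sign condition
on `R⁻¹·u`, the pair `v̄* = R⁻¹u/(uᵀR⁻¹u)`, `f* = 1/(uᵀR⁻¹u)` is feasible and optimal for
`min f s.t. R·v̄ ≤ f·u, uᵀ·v̄ = 1, v̄ ≥ 0`. -/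
theorem auxiliary_LP_optimal_solution
    {M : ℕ} (hM : 2 ≤ M)
    (C : Matrix (Fin M) (Fin M) ℝ) (sbar : Fin M → ℝ)
    (u : Fin M → ℝ) (hu : u = fun _ => 1)
    (R : Matrix (Fin M) (Fin M) ℝ) (hR : R = C - Matrix.of fun i _ => sbar i)
    (hCdet : IsUnit C.det)
    (hCTu : ∀ m, 0 ≤ (Matrix.transpose C)⁻¹.mulVec u m)
    (hne : 1 - (∑ m, C⁻¹.mulVec sbar m) ≠ 0)
    (hRdet : IsUnit R.det)
    (hsign : (∀ m, 0 ≤ R⁻¹.mulVec u m) ∨ (∀ m, R⁻¹.mulVec u m ≤ 0)) :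
    (∑ m, R⁻¹.mulVec u m) ≠ 0 ∧
    (∀ m, 0 ≤ R⁻¹.mulVec u m / (∑ m', R⁻¹.mulVec u m')) ∧
    (∑ m, R⁻¹.mulVec u m / (∑ m', R⁻¹.mulVec u m')) = 1 ∧
    (∀ m, R.mulVec (fun k => R⁻¹.mulVec u k / (∑ m', R⁻¹.mulVec u m')) m
        = 1 / (∑ m', R⁻¹.mulVec u m')) ∧
    (∀ (vbar : Fin M → ℝ) (f : ℝ), (∀ m, 0 ≤ vbar m) → (∑ m, vbar m) = 1 →
      (∀ m, R.mulVec vbar m ≤ f) → 1 / (∑ m', R⁻¹.mulVec u m') ≤ f) := by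
  obtain rfl : u = 1 := hu
  have : Nonempty (Fin M) := ⟨⟨0, by omega⟩⟩
  have hoptimal := auxiliary_LP_optimal_solution_general (b := 1) (fun _ => one_pos) one_pos
    (by simpa [vecMulVec] using hR) hCdet hCTu hRdet hsign
  simp only [one_dotProduct, Pi.one_apply, mul_one] at hoptimal
  obtain ⟨hsum, hnonneg, hnormalized, htight, hbound⟩ := hoptimal
  exact ⟨hsum, hnonneg, hnormalized, htight, fun v f _ => hbound v f⟩
end

section
/- Suppose C is an invertible M×M real matrix with (Cᵀ)⁻¹·u ≥ 0 componentwise, s̄ ∈ ℝ^M satisfies 1 − uᵀ·C⁻¹·s̄ ≠ 0, and R = C − s̄·uᵀ (which is then invertible). Then every pair (v̄, f) ∈ ℝ^M × ℝ with v̄ ≥ 0 componentwise, uᵀ·v̄ = 1, and R·v̄ ≤ f·u componentwise satisfies f ≥ 1 / (uᵀ·R⁻¹·u). -/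
open Matrix Finset

/-!
Subtracting the rank-one matrix `s pᵀ` from `C` only rescales the equation `yᵀ C = pᵀ`: the vector
`y = (Cᵀ)⁻¹ p` satisfies `yᵀ R = (1 - pᵀ C⁻¹ s) pᵀ` for `R = C - s pᵀ`. As `y ≥ 0`, weighting the
rows of `R v ≤ f b` by `y` gives `1 - pᵀ C⁻¹ s ≤ f (yᵀ b)` whenever `pᵀ v = 1`. Applying the
rescaled equation to `R⁻¹ b` gives `(1 - pᵀ C⁻¹ s) (pᵀ R⁻¹ b) = yᵀ b > 0`; thus `λ = y / (yᵀ b)` is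
the dual solution with objective value `w = 1 / (pᵀ R⁻¹ b)`. The auxiliary LP is `p = b = u`.
-/

section RankOneUpdate

variable {ι α : Type*} [Fintype ι] [DecidableEq ι] [CommRing α] {C : Matrix ι ι α}

theorem det_sub_vecMulVec (hC : IsUnit C.det) (s p : ι → α) :
    (C - vecMulVec s p).det = C.det * (1 - p ⬝ᵥ C⁻¹ *ᵥ s) := by
  have h := det_add_replicateCol_mul_replicateRow (ι := Unit) hC (-s) p
  rwa [← vecMulVec_eq, neg_vecMulVec, ← sub_eq_add_neg, det_unique (n := Unit), Matrix.add_apply,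
    one_apply_eq, Matrix.mul_assoc, ← replicateCol_mulVec, replicateRow_mul_replicateCol_apply,
    mulVec_neg, dotProduct_neg, ← sub_eq_add_neg] at h

theorem vecMul_inv_vecMul_sub_vecMulVec (hC : IsUnit C.det) (s p : ι → α) :
    (p ᵥ* C⁻¹) ᵥ* (C - vecMulVec s p) = (1 - p ⬝ᵥ C⁻¹ *ᵥ s) • p := by
  rw [vecMul_sub, vecMul_vecMul, nonsing_inv_mul _ hC, vecMul_one, vecMul_vecMulVec,
    ← dotProduct_mulVec, sub_smul, one_smul]

theorem mul_dotProduct_inv_sub_vecMulVec_mulVec {s p : ι → α} (hC : IsUnit C.det)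
    (hR : IsUnit (C - vecMulVec s p).det) (b : ι → α) :
    (1 - p ⬝ᵥ C⁻¹ *ᵥ s) * (p ⬝ᵥ (C - vecMulVec s p)⁻¹ *ᵥ b) = (p ᵥ* C⁻¹) ⬝ᵥ b := by
  rw [← smul_eq_mul, ← smul_dotProduct, ← vecMul_inv_vecMul_sub_vecMulVec hC, ← dotProduct_mulVec,
    mulVec_mulVec, mul_nonsing_inv _ hR, one_mulVec]

end RankOneUpdate

theorem vecMul_dotProduct_le_of_mulVec_le {m n α : Type*} [Fintype m] [Fintype n] [Semiring α]
    [PartialOrder α] [IsOrderedRing α] {A : Matrix m n α} {y c : m → α} {v : n → α}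
    (hy : 0 ≤ y) (hv : A *ᵥ v ≤ c) : (y ᵥ* A) ⬝ᵥ v ≤ y ⬝ᵥ c := by
  rw [← dotProduct_mulVec]
  exact dotProduct_le_dotProduct_of_nonneg_left hv hy

theorem dotProduct_pos_of_nonneg_of_pos {ι α : Type*} [Fintype ι] [Semiring α] [PartialOrder α]
    [IsStrictOrderedRing α] {y b : ι → α} (hy : 0 ≤ y) (hy₀ : y ≠ 0) (hb : ∀ i, 0 < b i) :
    0 < y ⬝ᵥ b := by
  obtain ⟨i, hi⟩ := Function.ne_iff.mp hy₀
  exact sum_pos' (fun j _ => mul_nonneg (hy j) (hb j).le)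
    ⟨i, mem_univ i, mul_pos ((hy i).lt_of_ne' hi) (hb i)⟩

theorem auxiliary_LP_weak_duality_general {ι K : Type*} [Fintype ι] [DecidableEq ι] [Field K]
    [LinearOrder K] [IsStrictOrderedRing K] {C : Matrix ι ι K} {s p b : ι → K}
    (hC : IsUnit C.det) (hy : 0 ≤ p ᵥ* C⁻¹) (hs : 1 - p ⬝ᵥ C⁻¹ *ᵥ s ≠ 0) (hb : ∀ i, 0 < b i) :
    IsUnit (C - vecMulVec s p).det ∧
    ∀ (v : ι → K) (f : K), p ⬝ᵥ v = 1 → (C - vecMulVec s p) *ᵥ v ≤ f • b →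
      1 / (p ⬝ᵥ (C - vecMulVec s p)⁻¹ *ᵥ b) ≤ f := by
  have hR : IsUnit (C - vecMulVec s p).det := by
    rw [det_sub_vecMulVec hC]
    exact hC.mul hs.isUnit
  refine ⟨hR, fun v f hpv hv => ?_⟩
  have dual_eq : ((p ᵥ* C⁻¹) ᵥ* (C - vecMulVec s p)) ⬝ᵥ v = 1 - p ⬝ᵥ C⁻¹ *ᵥ s := by
    rw [vecMul_inv_vecMul_sub_vecMulVec hC, smul_dotProduct, hpv, smul_eq_mul, mul_one]
  have hy₀ : p ᵥ* C⁻¹ ≠ 0 := by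
    intro h
    rw [h, zero_vecMul, zero_dotProduct] at dual_eq
    exact hs dual_eq.symm
  have hyb : 0 < (p ᵥ* C⁻¹) ⬝ᵥ b := dotProduct_pos_of_nonneg_of_pos hy hy₀ hb
  have value : (1 - p ⬝ᵥ C⁻¹ *ᵥ s) * (p ⬝ᵥ (C - vecMulVec s p)⁻¹ *ᵥ b) = (p ᵥ* C⁻¹) ⬝ᵥ b :=
    mul_dotProduct_inv_sub_vecMulVec_mulVec hC hR b
  calc 1 / (p ⬝ᵥ (C - vecMulVec s p)⁻¹ *ᵥ b)
      = (1 - p ⬝ᵥ C⁻¹ *ᵥ s) / ((p ᵥ* C⁻¹) ⬝ᵥ b) := by rw [← value, div_mul_cancel_left₀ hs, one_div]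
    _ ≤ f := by
      rw [div_le_iff₀ hyb, ← dual_eq, ← smul_eq_mul f, ← dotProduct_smul]
      exact vecMul_dotProduct_le_of_mulVec_le hy hv

/-- Weak-duality lower bound for the auxiliary LP: if `C` is invertible with
`(Cᵀ)⁻¹·u ≥ 0` and `1 − uᵀ·C⁻¹·s̄ ≠ 0`, then `R = C − s̄·uᵀ` is invertible and every
feasible `(v̄, f)` of the auxiliary LP satisfies `f ≥ 1/(uᵀ·R⁻¹·u)`. -/
theorem auxiliary_LP_weak_duality
    {M : ℕ} (hM : 2 ≤ M)
    (C : Matrix (Fin M) (Fin M) ℝ) (sbar : Fin M → ℝ)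
    (u : Fin M → ℝ) (hu : u = fun _ => 1)
    (R : Matrix (Fin M) (Fin M) ℝ) (hR : R = C - Matrix.of fun i _ => sbar i)
    (hCdet : IsUnit C.det)
    (hCTu : ∀ m, 0 ≤ (Matrix.transpose C)⁻¹.mulVec u m)
    (hne : 1 - (∑ m, C⁻¹.mulVec sbar m) ≠ 0) :
    IsUnit R.det ∧
    ∀ (vbar : Fin M → ℝ) (f : ℝ), (∀ m, 0 ≤ vbar m) → (∑ m, vbar m) = 1 →
      (∀ m, R.mulVec vbar m ≤ f) → 1 / (∑ m', R⁻¹.mulVec u m') ≤ f := by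
  obtain rfl : u = 1 := hu
  obtain rfl : R = C - vecMulVec sbar 1 := by rw [hR, vecMulVec_one]; rfl
  rw [← transpose_nonsing_inv, mulVec_transpose] at hCTu
  simp only [← one_dotProduct] at hne ⊢
  obtain ⟨hRdet, bound⟩ := auxiliary_LP_weak_duality_general hCdet hCTu hne fun _ => one_pos
  exact ⟨hRdet, fun v f _ hv hf => bound v f hv fun m => (hf m).trans_eq (mul_one f).symm⟩
end

section
/- Suppose the recharge rates are deterministic with s^(n) = s̄ for all n ≥ 1. Let v̄* ∈ ℝ^M satisfy v̄* ≥ 0, uᵀ·v̄* = 1, and R·v̄* ≤ f*·u with f* ≤ 0, and let ρ = max_{i,j} |R_{ij}|. Let (v^(n))_{n≥1} be any sequence of decision vectors whose cumulative sums stay close to the target fractions: ‖Σ_{t=1}^{n} v^(t) − n·v̄*‖_∞ ≤ M for all n ≥ 1. If e0 ≥ M²·τ·ρ, then e^(n) ≥ 0 componentwise for all n ≥ 1; in particular the network lifetime is infinite. -/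
open Matrix Finset

/-!
Write `R = C - s̄ uᵀ`. Since the decisions in each slot sum to `1`, after `n` slots with recharge
at least `s̄` the energy has dropped by at most `τ R V`, where `V` is the sum of the first `n`
decisions. Splitting `V = n v̄ + (V - n v̄)`, the first part contributes `n R v̄ ≤ 0`, and each
entry of `R (V - n v̄)` is a sum of `M` terms of size at most `ρ K`, where `K` bounds
`‖V - n v̄‖_∞`; this fixed amount is what the initial energy has to cover.
-/

/-- The matrix `R = C - s uᵀ` of the paper: `netDrain C s i j` is the net rate at which station `i`
loses energy, recharging at rate `s i`, while decision `j` is in force. -/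
def netDrain {m n α : Type*} [Sub α] (C : Matrix m n α) (s : m → α) : Matrix m n α :=
  C - Matrix.of fun i _ => s i

theorem netDrain_mulVec {m n α : Type*} [Fintype n] [NonUnitalNonAssocRing α]
    (C : Matrix m n α) (s : m → α) (x : n → α) (i : m) :
    (netDrain C s *ᵥ x) i = (C *ᵥ x) i - s i * ∑ j, x j := by
  rw [netDrain, sub_mulVec, Pi.sub_apply, mul_sum]
  rfl

section DotProduct

variable {ι α : Type*} [Fintype ι] [CommRing α] [LinearOrder α] [IsOrderedRing α]

theorem dotProduct_le_card_mul_of_abs_le {a x : ι → α} {ρ K : α}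
    (ha : ∀ j, |a j| ≤ ρ) (hx : ∀ j, |x j| ≤ K) :
    a ⬝ᵥ x ≤ Fintype.card ι * (ρ * K) := by
  rw [← nsmul_eq_mul]
  refine sum_le_card_nsmul univ _ _ fun j _ => ?_
  calc a j * x j ≤ |a j| * |x j| := (le_abs_self _).trans (abs_mul _ _).le
    _ ≤ ρ * K := mul_le_mul (ha j) (hx j) (abs_nonneg _) ((abs_nonneg _).trans (ha j))

theorem dotProduct_le_card_mul_of_abs_sub_smul_le {a x y : ι → α} {c ρ K : α} (hc : 0 ≤ c)
    (hax : a ⬝ᵥ x ≤ 0) (ha : ∀ j, |a j| ≤ ρ) (hxy : ∀ j, |y j - c * x j| ≤ K) :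
    a ⬝ᵥ y ≤ Fintype.card ι * (ρ * K) :=
  calc a ⬝ᵥ y = c * (a ⬝ᵥ x) + a ⬝ᵥ (y - c • x) := by
        rw [dotProduct_sub, dotProduct_smul, smul_eq_mul, add_sub_cancel]
    _ ≤ a ⬝ᵥ (y - c • x) := add_le_of_nonpos_left (mul_nonpos_of_nonneg_of_nonpos hc hax)
    _ ≤ Fintype.card ι * (ρ * K) := dotProduct_le_card_mul_of_abs_le ha hxy

end DotProduct

section Energy

variable {M : ℕ} {τ : ℝ} {C : Matrix (Fin M) (Fin M) ℝ} {e0 : ℝ} {s v : ℕ → Fin M → ℝ}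

theorem sub_netDrain_mulVec_le_energyVec {sbar : Fin M → ℝ} {n : ℕ} (hτ : 0 ≤ τ)
    (hs : ∀ t ∈ Icc 1 n, sbar ≤ s t) (hv : ∀ t ∈ Icc 1 n, ∑ j, v t j = 1) (m : Fin M) :
    e0 - τ * (netDrain C sbar *ᵥ ∑ t ∈ Icc 1 n, v t) m ≤ energyVec τ C e0 s v n m := by
  have total_decisions : ∑ j, (∑ t ∈ Icc 1 n, v t) j = n := by
    simp only [Finset.sum_apply]
    rw [sum_comm, sum_congr rfl hv]
    simp
  have recharge_ge : n * sbar m ≤ ∑ t ∈ Icc 1 n, s t m := by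
    simpa using card_nsmul_le_sum (Icc 1 n) (fun t => s t m) (sbar m) fun t ht => hs t ht m
  rw [netDrain_mulVec, total_decisions, energyVec]
  linarith [mul_le_mul_of_nonneg_left recharge_ge hτ]

theorem lifetime_eq_top_iff :
    lifetime τ C e0 s v = ⊤ ↔ ∀ n, 1 ≤ n → ∀ m, 0 ≤ energyVec τ C e0 s v (n + 1) m := by
  rw [lifetime, sInf_eq_top]
  constructor
  · intro h n hn m
    by_contra! hneg
    exact ENat.natCast_ne_top n (h n ⟨n, rfl, hn, m, hneg⟩)
  · rintro h _ ⟨n, rfl, hn, m, hneg⟩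
    exact absurd (h n hn m) hneg.not_ge

theorem energyVec_nonneg {sbar vbar : Fin M → ℝ} {ρ K : ℝ} {n : ℕ} {m : Fin M} (hτ : 0 ≤ τ)
    (hs : ∀ t ∈ Icc 1 n, sbar ≤ s t) (hv : ∀ t ∈ Icc 1 n, ∑ j, v t j = 1)
    (hfeas : (netDrain C sbar *ᵥ vbar) m ≤ 0) (hρ : ∀ j, |netDrain C sbar m j| ≤ ρ)
    (hclose : ∀ j, |(∑ t ∈ Icc 1 n, v t j) - n * vbar j| ≤ K)
    (he0 : M * K * τ * ρ ≤ e0) :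
    0 ≤ energyVec τ C e0 s v n m := by
  have drain_le : (netDrain C sbar *ᵥ ∑ t ∈ Icc 1 n, v t) m ≤ Fintype.card (Fin M) * (ρ * K) :=
    dotProduct_le_card_mul_of_abs_sub_smul_le n.cast_nonneg hfeas hρ
      (by simpa only [Finset.sum_apply] using hclose)
  rw [Fintype.card_fin] at drain_le
  calc 0 ≤ e0 - τ * (M * (ρ * K)) := by linarith
    _ ≤ e0 - τ * (netDrain C sbar *ᵥ ∑ t ∈ Icc 1 n, v t) m := by gcongr
    _ ≤ energyVec τ C e0 s v n m := sub_netDrain_mulVec_le_energyVec hτ hs hv m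

theorem energies_nonneg_of_deterministic_recharge_general {sbar vbar : Fin M → ℝ} {ρ K : ℝ}
    (hτ : 0 ≤ τ) (hs : ∀ n, 1 ≤ n → sbar ≤ s n)
    (hfeas : ∀ m, (netDrain C sbar *ᵥ vbar) m ≤ 0)
    (hρ : ∀ i j, |netDrain C sbar i j| ≤ ρ)
    (hv : ∀ n, 1 ≤ n → ∑ m, v n m = 1)
    (hclose : ∀ n, 1 ≤ n → ∀ m, |(∑ t ∈ Icc 1 n, v t m) - n * vbar m| ≤ K)
    (he0 : M * K * τ * ρ ≤ e0) :
    (∀ n, 1 ≤ n → ∀ m, 0 ≤ energyVec τ C e0 s v n m) ∧ lifetime τ C e0 s v = ⊤ := by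
  have nonneg : ∀ n, 1 ≤ n → ∀ m, 0 ≤ energyVec τ C e0 s v n m := fun n hn m =>
    energyVec_nonneg hτ (fun t ht => hs t (mem_Icc.mp ht).1) (fun t ht => hv t (mem_Icc.mp ht).1)
      (hfeas m) (hρ m) (hclose n hn) he0
  exact ⟨nonneg, lifetime_eq_top_iff.mpr fun n _ => nonneg (n + 1) n.succ_pos⟩

end Energy

/-- Deterministic recharge `s^(n) = s̄`: if the cumulative decisions stay within `M` of the
target fractions `v̄*` (feasible for the LP with value `f* ≤ 0`) and `e0 ≥ M²·τ·ρ` with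
`ρ = max_{i,j}|R_{ij}|`, then all energies stay nonnegative forever; in particular the
lifetime is infinite. -/
theorem energies_nonneg_of_deterministic_recharge
    {M : ℕ} (hM : 2 ≤ M)
    (τ : ℝ) (hτ : 0 < τ)
    (C : Matrix (Fin M) (Fin M) ℝ) (hC : ∀ i j, 0 ≤ C i j)
    (sbar : Fin M → ℝ)
    (s : ℕ → Fin M → ℝ) (hs : ∀ n, 1 ≤ n → s n = sbar)
    (vbar : Fin M → ℝ) (fstar : ℝ) (hfstar : fstar ≤ 0)
    (hvpos : ∀ m, 0 ≤ vbar m) (hvsum : (∑ m, vbar m) = 1)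
    (hfeas : ∀ m, (C - Matrix.of fun i _ => sbar i).mulVec vbar m ≤ fstar)
    (ρ : ℝ)
    (hρub : ∀ i j, |C i j - sbar i| ≤ ρ)
    (hρmem : ∃ i j, ρ = |C i j - sbar i|)
    (v : ℕ → Fin M → ℝ) (hvdec : ∀ t, IsDecision (v t))
    (hclose : ∀ n, 1 ≤ n → ∀ m,
      |(∑ t ∈ Finset.Icc 1 n, v t m) - (n : ℝ) * vbar m| ≤ M)
    (e0 : ℝ) (he0 : (M : ℝ)^2 * τ * ρ ≤ e0) :
    (∀ n, 1 ≤ n → ∀ m, 0 ≤ energyVec τ C e0 s v n m) ∧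
    lifetime τ C e0 s v = ⊤ :=
  energies_nonneg_of_deterministic_recharge_general hτ.le (fun n hn => (hs n hn).ge)
    (fun m => (hfeas m).trans hfstar) hρub (fun n _ => (hvdec n).2) hclose (by rwa [← sq])
end
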